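/- arXiv:2005.09154 — 4 statements merged into one kernel-verified Lean document; each statement's English description precedes it below -/
import Mathlib

section
/- Let α ∈ (1,2). For every m ∈ ℤ₊ and all j₁, j₂, j₃ ∈ ℤ with |j₁ − j₃| > 1, one has ‖ ψ_{j₁}(η₁) ψ_{j₂}(η₂) ψ_{j₃}(η₃) / (|η₁|^{1−α} − |η₃|^{1−α})^m ‖_{S^∞(ℝ³)} ≲ 2^{m(α−1) min{j₁, j₃}}, with implicit constant depending only on α and m. -/
/-!
Put `β = α - 1`. Because `|j₁ - j₃| ≥ 2`, the supports of `ψ_{j₁}` and `ψ_{j₃}` are separated by a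
factor larger than `1`. If `x` denotes the variable at the lower frequency `2 ^ l` and `z` the one
at the higher frequency `2 ^ h`, then `|z| ^ (-β) / |x| ^ (-β) < 1` on the support, and the negative
binomial series
`(|x| ^ (-β) - |z| ^ (-β)) ^ (-m) = ∑ₙ (n+m-1 choose m-1) |x| ^ (β(m+n)) |z| ^ (-βn)`
(`hasSum_denominator`) writes the symbol as a sum of products of one-variable symbols.

Each factor is a dyadic rescaling of `ψ_0(x) |x| ^ s`. Two integrations by parts bound its inverse
Fourier transform by `(1 + |s|) ^ 2 (8/5) ^ |s|` times an integrable kernel (`good_power`), and the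
rescaling contributes `2 ^ (js)` (`good_piece`). The `n`-th term therefore has `S^∞` norm at most
`2 ^ (mβl)` times a polynomial in `n` times `(16/25) ^ (βn)` (`coeff_bound`), which is summable
(`summable_coeff`); the terms are added up by `sInf3Norm_tsum_le`.
-/

open MeasureTheory Real
open scoped ENNReal

noncomputable section

/-- Inverse Fourier transform on `ℝ³` of a three-variable symbol. -/
def finv3 (κ : ℝ → ℝ → ℝ → ℂ) (y : ℝ × ℝ × ℝ) : ℂ :=
  ∫ η : ℝ × ℝ × ℝ,
    κ η.1 η.2.1 η.2.2
      * Complex.exp (Complex.I * (η.1 * y.1 + η.2.1 * y.2.1 + η.2.2 * y.2.2 : ℝ))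

/-- The `S^∞(ℝ³)` norm `‖F^{-1}κ‖_{L¹(ℝ³)}`. -/
def sInf3Norm (κ : ℝ → ℝ → ℝ → ℂ) : ℝ := (eLpNorm (finv3 κ) 1 volume).toReal

/-- Littlewood–Paley symbol `ψ_k(ξ) = ψ(ξ/2^k) - ψ(ξ/2^{k-1})`. -/
def lpSymb (ψ : ℝ → ℝ) (k : ℤ) (ξ : ℝ) : ℝ :=
  ψ (ξ / 2 ^ k) - ψ (ξ / 2 ^ (k - 1))

/-! ### One-dimensional symbols -/

/-- Unnormalised inverse Fourier transform on `ℝ`, with the same sign and normalisation as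
`finv3`. -/
def F1 (f : ℝ → ℝ) (y : ℝ) : ℂ := ∫ x : ℝ, (f x : ℂ) * Complex.exp (Complex.I * (x * y : ℝ))

/-- `f` is an integrable symbol living at frequency scale `2 ^ j`, of size `K`: its mass is at most
`K * 2 ^ j` and its inverse Fourier transform is at most `K` times the Poisson-type kernel at
scale `2 ^ (-j)`, whose integral is `π` for every `j`. In particular `‖F1 f‖_{L¹} ≤ π * K`. -/
structure Good (j : ℤ) (K : ℝ) (f : ℝ → ℝ) : Prop where
  integrable : Integrable f
  mass : ∫ x, |f x| ≤ K * 2 ^ j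
  decay : ∀ y, ‖F1 f y‖ ≤ K * (2 ^ j * (1 + (2 ^ j * y) ^ 2)⁻¹)

lemma norm_osc (t : ℝ) : ‖Complex.exp (Complex.I * (t : ℂ))‖ = 1 := by
  rw [mul_comm]; exact Complex.norm_exp_ofReal_mul_I t

lemma norm_F1_le (f : ℝ → ℝ) (y : ℝ) : ‖F1 f y‖ ≤ ∫ x, |f x| := by
  refine (norm_integral_le_integral_norm _).trans (le_of_eq ?_)
  congr 1; ext x
  rw [norm_mul, norm_osc, mul_one, Complex.norm_real, Real.norm_eq_abs]

lemma integrable_osc {f : ℝ → ℝ} (hf : Integrable f) (y : ℝ) :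
    Integrable fun x : ℝ => (f x : ℂ) * Complex.exp (Complex.I * (x * y : ℝ)) := by
  refine hf.ofReal.mul_bdd (c := 1) ?_ ?_
  · exact (by fun_prop : Continuous fun x : ℝ =>
      Complex.exp (Complex.I * ((x * y : ℝ) : ℂ))).aestronglyMeasurable
  · exact Filter.Eventually.of_forall fun x => (norm_osc _).le

lemma bounded_supp {f : ℝ → ℝ} {K : ℝ} (hf : Measurable f) (hs : ∀ x, f x ≠ 0 → |x| ≤ 2)
    (hK : ∀ x, |f x| ≤ K) : Integrable f ∧ ∫ x, |f x| ≤ 4 * K := by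
  have hi : Integrable ((Set.Icc (-2 : ℝ) 2).indicator fun _ => K) := by
    rw [integrable_indicator_iff measurableSet_Icc]
    exact integrableOn_const (by simp)
  have hle : ∀ x, |f x| ≤ (Set.Icc (-2 : ℝ) 2).indicator (fun _ => K) x := by
    intro x
    by_cases hx : x ∈ Set.Icc (-2 : ℝ) 2
    · rw [Set.indicator_of_mem hx]; exact hK x
    · rw [Set.indicator_of_notMem hx]
      by_contra h
      have : f x ≠ 0 := by rintro h0; simp [h0] at h
      exact hx (abs_le.mp (hs x this))
  have hfi : Integrable f :=
    hi.mono' hf.aestronglyMeasurable (Filter.Eventually.of_forall hle)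
  refine ⟨hfi, (integral_mono hfi.abs hi hle).trans (le_of_eq ?_)⟩
  rw [integral_indicator measurableSet_Icc, setIntegral_const]
  norm_num [Measure.real]

/-- Integration by parts: a derivative costs a factor `|y|` on the Fourier side. -/
lemma F1_deriv {f f' : ℝ → ℝ} (hf : Integrable f) (hf' : Integrable f')
    (hd : ∀ x, HasDerivAt f (f' x) x) (y : ℝ) : ‖F1 f' y‖ = |y| * ‖F1 f y‖ := by
  have hv : ∀ x : ℝ, HasDerivAt (fun x : ℝ => Complex.exp (Complex.I * (x * y : ℝ)))
      (Complex.I * y * Complex.exp (Complex.I * (x * y : ℝ))) x := by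
    intro x
    have h1 : HasDerivAt (fun x : ℝ => Complex.I * ((x * y : ℝ) : ℂ)) (Complex.I * y) x := by
      have := (((hasDerivAt_id x).mul_const y).ofReal_comp).const_mul Complex.I
      simpa using this
    convert h1.cexp using 1
    ring
  have h := integral_mul_deriv_eq_deriv_mul_of_integrable (A := ℂ)
    (u := fun x => (f x : ℂ)) (u' := fun x => (f' x : ℂ))
    (v := fun x : ℝ => Complex.exp (Complex.I * (x * y : ℝ)))
    (v' := fun x : ℝ => Complex.I * y * Complex.exp (Complex.I * (x * y : ℝ)))
    (fun x _ => (hd x).ofReal_comp) (fun x _ => hv x)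
    (by
      have := (integrable_osc hf y).const_mul (Complex.I * y)
      refine this.congr (Filter.Eventually.of_forall fun x => ?_)
      simp only [Pi.mul_apply]; ring)
    (integrable_osc hf' y) (integrable_osc hf y)
  have h2 : F1 f' y = -(Complex.I * y * F1 f y) := by
    unfold F1
    rw [← integral_const_mul, ← neg_eq_iff_eq_neg, ← h]
    congr 1; ext x; ring
  rw [h2, norm_neg, norm_mul, norm_mul]
  simp

/-- Two integrations by parts give the decay `(1 + y ^ 2)⁻¹` for a twice differentiable symbol. -/
lemma good_of_C2 {h h1 h2 : ℝ → ℝ} {K : ℝ}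
    (m0 : Measurable h) (m1 : Measurable h1) (m2 : Measurable h2)
    (s0 : ∀ x, h x ≠ 0 → |x| ≤ 2) (s1 : ∀ x, h1 x ≠ 0 → |x| ≤ 2) (s2 : ∀ x, h2 x ≠ 0 → |x| ≤ 2)
    (b0 : ∀ x, |h x| ≤ K) (b1 : ∀ x, |h1 x| ≤ K) (b2 : ∀ x, |h2 x| ≤ K)
    (d0 : ∀ x, HasDerivAt h (h1 x) x) (d1 : ∀ x, HasDerivAt h1 (h2 x) x) :
    Good 0 (8 * K) h := by
  obtain ⟨i0, n0⟩ := bounded_supp m0 s0 b0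
  obtain ⟨i1, -⟩ := bounded_supp m1 s1 b1
  obtain ⟨i2, n2⟩ := bounded_supp m2 s2 b2
  have hK : 0 ≤ K := (abs_nonneg _).trans (b0 0)
  refine ⟨i0, by norm_num; linarith, fun y => ?_⟩
  have e1 := F1_deriv i0 i1 d0 y
  have e2 := F1_deriv i1 i2 d1 y
  have u0 := (norm_F1_le h y).trans n0
  have u2 := (norm_F1_le h2 y).trans n2
  rw [e2, e1, ← mul_assoc, abs_mul_abs_self] at u2
  rw [zpow_zero, one_mul, one_mul, ← div_eq_mul_inv, le_div_iff₀ (by positivity)]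
  nlinarith

lemma Good.scale {h : ℝ → ℝ} {K : ℝ} (hg : Good 0 K h) (j : ℤ) {c : ℝ} (hc : 0 ≤ c) :
    Good j (c * K) fun x => c * h (x / 2 ^ j) := by
  have ha : (0 : ℝ) < 2 ^ j := by positivity
  obtain ⟨i, n, d⟩ := hg
  refine ⟨(i.comp_div ha.ne').const_mul c, ?_, fun y => ?_⟩
  · simp only [abs_mul, abs_of_nonneg hc]
    rw [integral_const_mul, Measure.integral_comp_div (fun x => |h x|), abs_of_pos ha, smul_eq_mul]
    simp only [zpow_zero, mul_one] at n
    calc c * (2 ^ j * ∫ y, |h y|) ≤ c * (2 ^ j * K) := by gcongr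
      _ = _ := by ring
  · have e : F1 (fun x => c * h (x / 2 ^ j)) y = c * (2 ^ j : ℝ) * F1 h (2 ^ j * y) := by
      unfold F1
      have := Measure.integral_comp_div
        (fun x : ℝ => (h x : ℂ) * Complex.exp (Complex.I * ((x * (2 ^ j * y) : ℝ) : ℂ))) (2 ^ j : ℝ)
      rw [abs_of_pos ha, Complex.real_smul] at this
      rw [mul_assoc, ← this, ← integral_const_mul]
      congr 1; ext x
      have e : x / 2 ^ j * (2 ^ j * y) = x * y := by field_simp
      rw [e]; push_cast; ring
    rw [e, norm_mul, norm_mul, Complex.norm_real, Complex.norm_real, Real.norm_of_nonneg hc,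
      Real.norm_of_nonneg ha.le]
    have := d (2 ^ j * y)
    simp only [zpow_zero, one_mul] at this
    calc c * 2 ^ j * ‖F1 h (2 ^ j * y)‖ ≤ c * 2 ^ j * (K * (1 + (2 ^ j * y) ^ 2)⁻¹) := by gcongr
      _ = _ := by ring

/-! ### Powers cut off to a dyadic annulus -/

/-- `φ` vanishes outside the annulus `5/8 ≤ |x| ≤ 8/5`, which carries `ψ_0`. -/
def Ann (φ : ℝ → ℝ) : Prop := ∀ x, φ x ≠ 0 → 5 / 8 ≤ |x| ∧ |x| ≤ 8 / 5

lemma Ann.deriv {φ : ℝ → ℝ} (h : Ann φ) : Ann (deriv φ) := by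
  intro x hx
  have hcl : IsClosed {x : ℝ | 5 / 8 ≤ |x| ∧ |x| ≤ 8 / 5} :=
    (isClosed_le continuous_const continuous_abs).inter
      (isClosed_le continuous_abs continuous_const)
  exact closure_minimal (fun x hx => h x hx) hcl (support_deriv_subset hx)

lemma Ann.bounded {φ : ℝ → ℝ} (h : Ann φ) (hc : Continuous φ) : ∃ M, 0 ≤ M ∧ ∀ x, |φ x| ≤ M := by
  obtain ⟨M, hM⟩ := hc.bounded_above_of_compact_support
    (HasCompactSupport.intro (isCompact_Icc (a := (-2 : ℝ)) (b := 2)) fun x hx => by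
      by_contra h0
      have := abs_le.mp (h x h0).2
      exact hx ⟨by linarith, by linarith⟩)
  exact ⟨M, (norm_nonneg _).trans (hM 0), hM⟩

/-- Product rule for `φ(x) |x| ^ s`, the power being written `exp (s * log x)`, since `Real.log x`
is `log |x|`. It holds at `x = 0` too, because `φ` vanishes near the origin. -/
lemma Ann.hasDerivAt {φ φ' : ℝ → ℝ} (h : Ann φ) (h' : Ann φ')
    (hd : ∀ x, x ≠ 0 → HasDerivAt φ (φ' x) x) (s x : ℝ) :
    HasDerivAt (fun x => φ x * exp (s * log x)) ((φ' x + s * (φ x / x)) * exp (s * log x)) x := by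
  rcases eq_or_ne x 0 with rfl | hx
  · have z : ∀ x : ℝ, |x| < 5 / 8 → φ x = 0 := fun x hx => by
      by_contra h0; exact absurd (h x h0).1 (not_le.mpr hx)
    have z' : φ' 0 = 0 := by by_contra h0; have := (h' 0 h0).1; norm_num at this
    have : (fun x => φ x * exp (s * log x)) =ᶠ[nhds 0] fun _ => 0 := by
      filter_upwards [Metric.ball_mem_nhds (0 : ℝ) (by norm_num : (0 : ℝ) < 5 / 8)] with x hx
      rw [z x (by simpa using hx), zero_mul]
    simpa [z'] using (hasDerivAt_const (0 : ℝ) (0 : ℝ)).congr_of_eventuallyEq this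
  · have := (hd x hx).mul (((Real.hasDerivAt_log hx).const_mul s).exp)
    exact this.congr_deriv (by ring)

lemma exp_log_le {s x : ℝ} (h1 : 5 / 8 ≤ |x|) (h2 : |x| ≤ 8 / 5) :
    exp (s * log x) ≤ (8 / 5 : ℝ) ^ |s| := by
  rw [Real.rpow_def_of_pos (by norm_num), mul_comm (log _)]
  apply exp_le_exp.mpr
  have hl : |log x| ≤ log (8 / 5) := by
    rw [← Real.log_abs, abs_le]
    constructor
    · rw [← Real.log_inv]; exact Real.log_le_log (by norm_num) (by norm_num; linarith)
    · exact Real.log_le_log (by linarith) h2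
  calc s * log x ≤ |s * log x| := le_abs_self _
    _ = |s| * |log x| := abs_mul _ _
    _ ≤ _ := by gcongr

/-- The size of `φ(x) |x| ^ s` grows only quadratically in `s`, apart from the factor
`(8/5) ^ |s|` coming from the size of the power on the annulus. The base matters: its square
has to stay below the frequency gap `4` exploited in `coeff_bound`. -/
lemma good_power {φ : ℝ → ℝ} (h : Ann φ) (hφ : ContDiff ℝ (⊤ : ℕ∞) φ) :
    ∃ C, 0 < C ∧ ∀ s : ℝ,
      Good 0 (C * ((1 + |s|) ^ 2 * (8 / 5 : ℝ) ^ |s|)) fun x => φ x * exp (s * log x) := by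
  have hc1 : ContDiff ℝ (⊤ : ℕ∞) (deriv φ) := by
    exact (contDiff_infty_iff_deriv.mp hφ).2
  have hc2 : ContDiff ℝ (⊤ : ℕ∞) (deriv (deriv φ)) := by
    exact (contDiff_infty_iff_deriv.mp hc1).2
  have dφ : ∀ x, HasDerivAt φ (deriv φ x) x := fun x =>
    ((contDiff_infty_iff_deriv.mp hφ).1 x).hasDerivAt
  have dφ1 : ∀ x, HasDerivAt (deriv φ) (deriv (deriv φ) x) x := fun x =>
    ((contDiff_infty_iff_deriv.mp hc1).1 x).hasDerivAt
  have a1 := h.deriv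
  have a2 := a1.deriv
  obtain ⟨M0, p0, hM0⟩ := h.bounded hφ.continuous
  obtain ⟨M1, p1, hM1⟩ := a1.bounded hc1.continuous
  obtain ⟨M2, p2, hM2⟩ := a2.bounded hc2.continuous
  set M := M0 + M1 + M2 + 1 with hM
  have q0 : ∀ x, |φ x| ≤ M := fun x => (hM0 x).trans (by linarith)
  have q1 : ∀ x, |deriv φ x| ≤ M := fun x => (hM1 x).trans (by linarith)
  have q2 : ∀ x, |deriv (deriv φ) x| ≤ M := fun x => (hM2 x).trans (by linarith)
  have hMp : 0 < M := by linarith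
  refine ⟨8 * (4 * M), by positivity, fun s => ?_⟩
  have zero_of : ∀ {g : ℝ → ℝ}, Ann g → ∀ {x : ℝ}, ¬ (5 / 8 ≤ |x| ∧ |x| ≤ 8 / 5) → g x = 0 :=
    fun hg x hx => by by_contra h0; exact hx (hg x h0)
  -- `φ1 * |x| ^ s` is the derivative of `φ * |x| ^ s`, and `φ2` is the derivative of `φ1`.
  let φ1 : ℝ → ℝ := fun x => deriv φ x + s * (φ x / x)
  let φ2 : ℝ → ℝ := fun x =>
    deriv (deriv φ) x + s * ((deriv φ x * x - φ x * 1) / x ^ 2)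
  have A1 : Ann φ1 := fun x hx => by
    by_contra hn; exact hx (by simp [φ1, zero_of h hn, zero_of a1 hn])
  have A2 : Ann φ2 := fun x hx => by
    by_contra hn; exact hx (by simp [φ2, zero_of h hn, zero_of a1 hn, zero_of a2 hn])
  have dd1 : ∀ x, x ≠ 0 → HasDerivAt φ1 (φ2 x) x := fun x hx =>
    (dφ1 x).add (((dφ x).div (hasDerivAt_id x) hx).const_mul s)
  have mφ := hφ.continuous.measurable
  have mφ1 := hc1.continuous.measurable
  have mφ2 := hc2.continuous.measurable
  have supp : ∀ u : ℝ → ℝ, Ann u → ∀ x, u x * exp (s * log x) ≠ 0 → |x| ≤ 2 := fun u hu x hx =>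
    (hu x (left_ne_zero_of_mul hx)).2.trans (by norm_num)
  have bd : ∀ u : ℝ → ℝ, Ann u →
      (∀ x, 5 / 8 ≤ |x| → |u x| ≤ 4 * M * (1 + |s|) ^ 2) →
      ∀ x, |u x * exp (s * log x)| ≤ 4 * M * ((1 + |s|) ^ 2 * (8 / 5 : ℝ) ^ |s|) := by
    intro u hu hb x
    by_cases hx : 5 / 8 ≤ |x| ∧ |x| ≤ 8 / 5
    · rw [abs_mul, abs_of_pos (exp_pos _), ← mul_assoc]
      exact mul_le_mul (hb x hx.1) (exp_log_le hx.1 hx.2) (exp_pos _).le (by positivity)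
    · rw [zero_of hu hx, zero_mul, abs_zero]; positivity
  have sp := abs_nonneg s
  have inv : ∀ x : ℝ, 5 / 8 ≤ |x| → |x⁻¹| ≤ 2 := fun x hx => by
    rw [abs_inv]; exact inv_le_of_inv_le₀ (by norm_num) (by linarith)
  have Bq : ∀ (u : ℝ → ℝ) (N : ℝ) (x : ℝ), |u x| ≤ N → 5 / 8 ≤ |x| →
      |s * (u x / x)| ≤ |s| * (N * 2) := by
    intro u N x hu hx
    rw [abs_mul, div_eq_mul_inv, abs_mul]
    have := inv x hx
    have : 0 ≤ N := (abs_nonneg _).trans hu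
    gcongr
  have B1 : ∀ x, 5 / 8 ≤ |x| → |φ1 x| ≤ M + |s| * (M * 2) := fun x hx =>
    (abs_add_le _ _).trans (add_le_add (q1 x) (Bq φ M x (q0 x) hx))
  have B2 : ∀ x, 5 / 8 ≤ |x| → |φ2 x| ≤ M + |s| * (M * 2 + M * 4) := fun x hx => by
    refine (abs_add_le _ _).trans (add_le_add (q2 x) ?_)
    have hx0 : x ≠ 0 := by rintro rfl; norm_num at hx
    have e : (deriv φ x * x - φ x * 1) / x ^ 2 = deriv φ x * x⁻¹ - φ x * (x⁻¹ * x⁻¹) := by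
      field_simp
    rw [e, abs_mul]
    gcongr
    refine (abs_sub _ _).trans ?_
    rw [abs_mul, abs_mul, abs_mul]
    have h1 := inv x hx
    have h2 := q0 x
    have h3 := q1 x
    have h4 : |x⁻¹| * |x⁻¹| ≤ 4 := by nlinarith [abs_nonneg x⁻¹]
    gcongr
  rw [mul_assoc]
  refine good_of_C2 (h1 := fun x => φ1 x * exp (s * log x))
    (h2 := fun x => (φ2 x + s * (φ1 x / x)) * exp (s * log x)) ?_ ?_ ?_
    (supp _ h) (supp _ A1) ?_ (bd _ h ?_) (bd _ A1 ?_) (bd _ ?_ ?_)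
    (h.hasDerivAt a1 (fun x _ => dφ x) s) (A1.hasDerivAt A2 dd1 s)
  · fun_prop
  · fun_prop
  · fun_prop
  · refine supp (fun x => φ2 x + s * (φ1 x / x)) fun x hx => ?_
    by_contra hn; exact hx (by simp [zero_of A1 hn, zero_of A2 hn])
  · intro x _
    have := q0 x
    nlinarith [mul_nonneg hMp.le sp, mul_nonneg hMp.le (sq_nonneg s), sq_abs s]
  · intro x hx
    have := B1 x hx
    nlinarith [mul_nonneg hMp.le sp, mul_nonneg hMp.le (sq_nonneg s), sq_abs s]
  · intro x hx
    by_contra hn; exact hx (by simp [zero_of A1 hn, zero_of A2 hn])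
  · intro x hx
    refine (abs_add_le _ _).trans ((add_le_add (B2 x hx) (Bq φ1 _ x (B1 x hx) hx)).trans ?_)
    nlinarith [mul_nonneg hMp.le sp, mul_nonneg hMp.le (sq_nonneg s), sq_abs s]

/-! ### Summing separated symbols -/

/-- The kernel `2 ^ j / (1 + (2 ^ j y) ^ 2)` in the decay bound of `Good`. -/
def wt (j : ℤ) (y : ℝ) : ℝ := 2 ^ j * (1 + (2 ^ j * y) ^ 2)⁻¹

lemma wt_integrable (j : ℤ) : Integrable (wt j) :=
  (integrable_inv_one_add_sq.comp_mul_left' (by positivity : (2 : ℝ) ^ j ≠ 0)).const_mul _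

lemma integral_wt (j : ℤ) : ∫ y, wt j y = π := by
  have ha : (0 : ℝ) < 2 ^ j := by positivity
  unfold wt
  rw [integral_const_mul, Measure.integral_comp_mul_left (fun x : ℝ => (1 + x ^ 2)⁻¹),
    integral_univ_inv_one_add_sq, abs_of_pos (by positivity), smul_eq_mul]
  field_simp

lemma wt_nonneg (j : ℤ) (y : ℝ) : 0 ≤ wt j y := by unfold wt; positivity

lemma Good.nonneg {j : ℤ} {K : ℝ} {f : ℝ → ℝ} (h : Good j K f) : 0 ≤ K := by
  have h1 : 0 ≤ K * 2 ^ j := (integral_nonneg fun x => abs_nonneg (f x)).trans h.mass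
  exact nonneg_of_mul_nonneg_left h1 (by positivity)

/-- The `S^∞` norm of a series of separated symbols is bounded by the sum of the products of the
one-dimensional sizes: the inverse Fourier transform is taken term by term, and every term is
dominated by a multiple of the same product kernel, of integral `π ^ 3`. -/
lemma sInf3Norm_tsum_le {j₁ j₂ j₃ : ℤ} {f g : ℕ → ℝ → ℝ} {b : ℝ → ℝ} {c P Q : ℕ → ℝ} {B : ℝ}
    (hf : ∀ n, Good j₁ (P n) (f n)) (hb : Good j₂ B b) (hg : ∀ n, Good j₃ (Q n) (g n))
    (hs : Summable fun n => |c n| * P n * Q n) {κ : ℝ → ℝ → ℝ → ℝ}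
    (hκ : ∀ x y z, HasSum (fun n => c n * (f n x * (b y * g n z))) (κ x y z)) :
    sInf3Norm (fun x y z => (κ x y z : ℂ)) ≤ π ^ 3 * B * ∑' n, |c n| * P n * Q n := by
  set S := ∑' n, |c n| * P n * Q n with hS
  let e : ℝ → ℝ → ℂ := fun x y => Complex.exp (Complex.I * (x * y : ℝ))
  -- The `n`-th term of the integrand at `y`, with the exponential split over the coordinates.
  let T : (ℝ × ℝ × ℝ) → ℕ → (ℝ × ℝ × ℝ) → ℂ := fun y n η =>
    (c n : ℂ) * ((f n η.1 * e η.1 y.1) * ((b η.2.1 * e η.2.1 y.2.1) * (g n η.2.2 * e η.2.2 y.2.2)))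
  have hTi : ∀ y n, Integrable (T y n) := fun y n =>
    (((integrable_osc (hf n).integrable y.1).mul_prod
      ((integrable_osc hb.integrable y.2.1).mul_prod
        (integrable_osc (hg n).integrable y.2.2))).const_mul _)
  have hTint : ∀ y n, ∫ η, T y n η = c n * (F1 (f n) y.1 * (F1 b y.2.1 * F1 (g n) y.2.2)) := by
    intro y n
    simp only [T]
    rw [integral_const_mul, Measure.volume_eq_prod,
      integral_prod_mul (fun x : ℝ => (f n x : ℂ) * e x y.1)
        (fun η : ℝ × ℝ => ((b η.1 : ℂ) * e η.1 y.2.1) * (g n η.2 * e η.2 y.2.2)),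
      Measure.volume_eq_prod,
      integral_prod_mul (fun x : ℝ => (b x : ℂ) * e x y.2.1)
        (fun x : ℝ => (g n x : ℂ) * e x y.2.2)]
    rfl
  have hTn : ∀ y n, ∫ η, ‖T y n η‖ =
      |c n| * ((∫ x, |f n x|) * ((∫ x, |b x|) * ∫ x, |g n x|)) := by
    intro y n
    have : ∀ η, ‖T y n η‖ = |c n| * (|f n η.1| * (|b η.2.1| * |g n η.2.2|)) := by
      intro η
      simp only [T, e, norm_mul, norm_osc, Complex.norm_real, Real.norm_eq_abs, mul_one]
    simp only [this]
    rw [integral_const_mul, Measure.volume_eq_prod,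
      integral_prod_mul (fun x : ℝ => |f n x|) (fun η : ℝ × ℝ => |b η.1| * |g n η.2|),
      Measure.volume_eq_prod, integral_prod_mul (fun x : ℝ => |b x|) (fun x : ℝ => |g n x|)]
  have hTs : ∀ y, Summable fun n => ∫ η, ‖T y n η‖ := by
    intro y
    refine Summable.of_nonneg_of_le (fun n => integral_nonneg fun _ => norm_nonneg _) (fun n => ?_)
      (hs.mul_right (2 ^ j₁ * (B * 2 ^ j₂ * 2 ^ j₃)))
    rw [hTn]
    have p1 := (hf n).nonneg
    have p3 := (hg n).nonneg
    have p2 := hb.nonneg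
    calc |c n| * ((∫ x, |f n x|) * ((∫ x, |b x|) * ∫ x, |g n x|))
        ≤ |c n| * ((P n * 2 ^ j₁) * ((B * 2 ^ j₂) * (Q n * 2 ^ j₃))) := by
          gcongr
          · exact (hf n).mass
          · exact hb.mass
          · exact (hg n).mass
      _ = _ := by ring
  have key : ∀ y, ‖finv3 (fun x y z => (κ x y z : ℂ)) y‖ ≤
      B * S * (wt j₁ y.1 * (wt j₂ y.2.1 * wt j₃ y.2.2)) := by
    intro y
    have h1 := hasSum_integral_of_summable_integral_norm (hTi y) (hTs y)
    have h2 : finv3 (fun x y z => (κ x y z : ℂ)) y = ∫ η, ∑' n, T y n η := by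
      unfold finv3
      congr 1; ext η
      have h3 := ((hκ η.1 η.2.1 η.2.2).mapL Complex.ofRealCLM).mul_right
        (Complex.exp (Complex.I * (η.1 * y.1 + η.2.1 * y.2.1 + η.2.2 * y.2.2 : ℝ)))
      refine h3.tsum_eq.symm.trans ?_
      congr 1; ext n
      simp only [T, e, Complex.ofRealCLM_apply]
      push_cast
      rw [mul_add, mul_add, Complex.exp_add, Complex.exp_add]
      ring
    rw [h2, ← h1.tsum_eq]
    refine tsum_of_norm_bounded
      (g := fun n => |c n| * P n * Q n * (B * (wt j₁ y.1 * (wt j₂ y.2.1 * wt j₃ y.2.2))))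
      ?_ fun n => ?_
    · have := hs.hasSum.mul_right (B * (wt j₁ y.1 * (wt j₂ y.2.1 * wt j₃ y.2.2)))
      rw [← hS] at this
      rwa [show B * S * (wt j₁ y.1 * (wt j₂ y.2.1 * wt j₃ y.2.2)) =
        S * (B * (wt j₁ y.1 * (wt j₂ y.2.1 * wt j₃ y.2.2))) by ring]
    · rw [hTint]
      simp only [norm_mul, Complex.norm_real, Real.norm_eq_abs]
      have p1 := (hf n).nonneg
      have p3 := (hg n).nonneg
      have p2 := hb.nonneg
      have w1 := wt_nonneg j₁ y.1
      have w2 := wt_nonneg j₂ y.2.1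
      have d1 : ‖F1 (f n) y.1‖ ≤ P n * wt j₁ y.1 := (hf n).decay _
      have d2 : ‖F1 b y.2.1‖ ≤ B * wt j₂ y.2.1 := hb.decay _
      have d3 : ‖F1 (g n) y.2.2‖ ≤ Q n * wt j₃ y.2.2 := (hg n).decay _
      calc |c n| * (‖F1 (f n) y.1‖ * (‖F1 b y.2.1‖ * ‖F1 (g n) y.2.2‖))
          ≤ |c n| * ((P n * wt j₁ y.1) * ((B * wt j₂ y.2.1) * (Q n * wt j₃ y.2.2))) := by gcongr
        _ = _ := by ring
  have hS0 : 0 ≤ S := tsum_nonneg fun n =>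
    mul_nonneg (mul_nonneg (abs_nonneg _) (hf n).nonneg) (hg n).nonneg
  have hWi : Integrable fun y : ℝ × ℝ × ℝ => B * S * (wt j₁ y.1 * (wt j₂ y.2.1 * wt j₃ y.2.2)) :=
    ((wt_integrable j₁).mul_prod ((wt_integrable j₂).mul_prod (wt_integrable j₃))).const_mul _
  have hWn : ∀ y : ℝ × ℝ × ℝ, 0 ≤ B * S * (wt j₁ y.1 * (wt j₂ y.2.1 * wt j₃ y.2.2)) := fun y =>
    mul_nonneg (mul_nonneg hb.nonneg hS0)
      (mul_nonneg (wt_nonneg _ _) (mul_nonneg (wt_nonneg _ _) (wt_nonneg _ _)))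
  have hWv : ∫ y : ℝ × ℝ × ℝ, B * S * (wt j₁ y.1 * (wt j₂ y.2.1 * wt j₃ y.2.2)) =
      π ^ 3 * B * S := by
    rw [integral_const_mul, Measure.volume_eq_prod,
      integral_prod_mul (wt j₁) (fun η : ℝ × ℝ => wt j₂ η.1 * wt j₃ η.2),
      Measure.volume_eq_prod, integral_prod_mul (wt j₂) (wt j₃), integral_wt, integral_wt,
      integral_wt]
    ring
  unfold sInf3Norm
  refine ENNReal.toReal_le_of_le_ofReal (hWv ▸ integral_nonneg hWn) ?_
  refine (eLpNorm_mono_real key).trans (le_of_eq ?_)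
  rw [eLpNorm_one_eq_lintegral_enorm, ← ofReal_integral_norm_eq_lintegral_enorm hWi, ← hWv]
  congr 2; ext y
  exact Real.norm_of_nonneg (hWn y)

/-! ### Littlewood–Paley pieces and the expansion of the denominator -/

lemma lpSymb_eq (ψ : ℝ → ℝ) (j : ℤ) (x : ℝ) : lpSymb ψ j x = lpSymb ψ 0 (x / 2 ^ j) := by
  unfold lpSymb
  rw [zpow_sub₀ (by norm_num), zpow_sub₀ (by norm_num), zpow_zero]
  congr 2
  · simp
  · field_simp

lemma ann_lpSymb {ψ : ℝ → ℝ} (hψsupp : ∀ ξ, ψ ξ ≠ 0 → |ξ| ≤ 8 / 5)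
    (hψone : ∀ ξ, |ξ| ≤ 5 / 4 → ψ ξ = 1) : Ann (lpSymb ψ 0) := by
  intro x hx
  have e : lpSymb ψ 0 x = ψ x - ψ (2 * x) := by
    unfold lpSymb; norm_num; ring_nf
  rw [e] at hx
  have a2 : |2 * x| = 2 * |x| := by rw [abs_mul]; norm_num
  by_contra hn
  rw [not_and_or, not_le, not_le] at hn
  apply hx
  rcases hn with hn | hn
  · rw [hψone x (by linarith), hψone (2 * x) (by linarith), sub_self]
  · have z : ∀ y, 8 / 5 < |y| → ψ y = 0 := fun y hy => by
      by_contra h0; exact absurd (hψsupp y h0) (not_le.mpr hy)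
    rw [z x hn, z (2 * x) (by linarith), sub_self]

lemma good_piece {ψ : ℝ → ℝ} {s K : ℝ} (ha : Ann (lpSymb ψ 0))
    (hg : Good 0 K fun x => lpSymb ψ 0 x * exp (s * log x)) (j : ℤ) :
    Good j ((2 : ℝ) ^ (j * s) * K) fun x => lpSymb ψ j x * exp (s * log x) := by
  convert hg.scale j (c := (2 : ℝ) ^ (j * s)) (by positivity) using 1
  ext x
  rw [lpSymb_eq]
  rcases eq_or_ne x 0 with rfl | hx
  · have : lpSymb ψ 0 0 = 0 := by by_contra h0; have := (ha 0 h0).1; norm_num at this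
    simp [this]
  · rw [Real.log_div hx (by positivity), Real.log_zpow, Real.rpow_def_of_pos (by norm_num),
      mul_left_comm, ← Real.exp_add]
    congr 2; ring

/-- Negative binomial expansion of `(|x| ^ (-β) - |z| ^ (-β)) ^ (-(k + 1))` in powers of the ratio
`|z| ^ (-β) / |x| ^ (-β) < 1`; each term is a function of `x` times a function of `z`. -/
lemma hasSum_denominator (k : ℕ) {β x z : ℝ} (hβ : 0 < β) (hx : x ≠ 0) (hxz : |x| < |z|) :
    HasSum (fun n : ℕ => ((n + k).choose k : ℝ) *
        (exp (β * (k + 1 + n) * log x) * exp (-(β * n) * log z)))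
      (1 / (|x| ^ (-β) - |z| ^ (-β)) ^ (k + 1)) := by
  have hx0 : 0 < |x| := abs_pos.mpr hx
  have hz0 : 0 < |z| := hx0.trans hxz
  have hlt : |z| ^ (-β) < |x| ^ (-β) := Real.rpow_lt_rpow_of_neg hx0 hxz (by linarith)
  have ha0 : 0 < |x| ^ (-β) := by positivity
  have hb0 : 0 < |z| ^ (-β) := by positivity
  have ea : (|x| ^ (-β))⁻¹ = exp (β * log x) := by
    rw [Real.rpow_neg hx0.le, inv_inv, Real.rpow_def_of_pos hx0, Real.log_abs, mul_comm]
  have eb : |z| ^ (-β) = exp (-β * log z) := by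
    rw [Real.rpow_def_of_pos hz0, Real.log_abs, mul_comm]
  set a := |x| ^ (-β)
  set b := |z| ^ (-β)
  have hr : ‖b / a‖ < 1 := by
    rw [Real.norm_of_nonneg (by positivity), div_lt_one ha0]; exact hlt
  have h := (hasSum_choose_mul_geometric_of_norm_lt_one k hr).mul_left (a⁻¹ ^ (k + 1))
  convert! h using 1
  · ext n
    have e1 : exp (β * (k + 1 + n) * log x) = a⁻¹ ^ (k + 1) * a⁻¹ ^ n := by
      rw [ea, ← pow_add, ← Real.exp_nat_mul]; congr 1; push_cast; ring
    have e2 : exp (-(β * n) * log z) = b ^ n := by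
      rw [eb, ← Real.exp_nat_mul]; congr 1; ring
    rw [e1, e2, div_eq_mul_inv, mul_pow]; ring
  · have : a - b = a * (1 - b / a) := by field_simp
    rw [this, mul_pow, inv_pow, one_div, mul_inv, one_div]

/-- Size of the `n`-th term of the expansion with low frequency `2 ^ l` and high frequency `2 ^ h`.
The powers contribute `(8/5) ^ (2βn)` and the scales `2 ^ (-(h - l)βn) ≤ 4 ^ (-βn)`, so the
geometric ratio is `((64/25) / 4) ^ β = (16/25) ^ β < 1`. -/
lemma coeff_bound {β C : ℝ} (hβ : 0 < β) (k : ℕ) {l h : ℤ} (hlh : l + 2 ≤ h) (n : ℕ) :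
    |((n + k).choose k : ℝ)| *
        ((2 : ℝ) ^ (l * (β * (k + 1 + n))) *
          (C * ((1 + |β * (k + 1 + n)|) ^ 2 * (8 / 5 : ℝ) ^ |β * (k + 1 + n)|))) *
        ((2 : ℝ) ^ (h * (-(β * n))) *
          (C * ((1 + |-(β * n)|) ^ 2 * (8 / 5 : ℝ) ^ |-(β * n)|))) ≤
      (2 : ℝ) ^ ((k + 1) * β * l) *
        (((n + k).choose k : ℝ) * C ^ 2 * (1 + β * (k + 1 + n)) ^ 2 * (1 + β * n) ^ 2 *
          (8 / 5 : ℝ) ^ (β * (k + 1)) * ((16 / 25 : ℝ) ^ β) ^ n) := by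
  rw [abs_neg, abs_of_nonneg (by positivity : 0 ≤ β * (k + 1 + n : ℝ)),
    abs_of_nonneg (by positivity : 0 ≤ β * (n : ℝ)), Nat.abs_cast]
  have hlh' : (l : ℝ) + 2 ≤ h := by exact_mod_cast hlh
  have key : (2 : ℝ) ^ (l * (β * (k + 1 + n))) * (8 / 5 : ℝ) ^ (β * (k + 1 + n)) *
      ((2 : ℝ) ^ (h * (-(β * n))) * (8 / 5 : ℝ) ^ (β * n)) ≤
      (2 : ℝ) ^ ((k + 1) * β * l) * ((8 / 5 : ℝ) ^ (β * (k + 1)) * ((16 / 25 : ℝ) ^ β) ^ n) := by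
    have e16 : log (16 / 25 : ℝ) = 2 * log (8 / 5) - 2 * log 2 := by
      rw [show (16 / 25 : ℝ) = (8 / 5) ^ 2 / 2 ^ 2 by norm_num,
        Real.log_div (by norm_num) (by norm_num), Real.log_pow, Real.log_pow]
      norm_num
    rw [← Real.rpow_natCast, ← Real.rpow_mul (by norm_num)]
    simp only [Real.rpow_def_of_pos (by norm_num : (0 : ℝ) < 2),
      Real.rpow_def_of_pos (by norm_num : (0 : ℝ) < 8 / 5),
      Real.rpow_def_of_pos (by norm_num : (0 : ℝ) < 16 / 25), ← Real.exp_add, e16]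
    apply exp_le_exp.mpr
    have : 0 ≤ log 2 * (β * n) * (h - (l + 2)) := by
      have := Real.log_nonneg (by norm_num : (1 : ℝ) ≤ 2)
      have : 0 ≤ (h : ℝ) - (l + 2) := by linarith
      positivity
    linarith
  calc _ = ((n + k).choose k : ℝ) * C ^ 2 * (1 + β * (k + 1 + n)) ^ 2 * (1 + β * n) ^ 2 *
        ((2 : ℝ) ^ (l * (β * (k + 1 + n))) * (8 / 5 : ℝ) ^ (β * (k + 1 + n)) *
      ((2 : ℝ) ^ (h * (-(β * n))) * (8 / 5 : ℝ) ^ (β * n))) := by ring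
    _ ≤ ((n + k).choose k : ℝ) * C ^ 2 * (1 + β * (k + 1 + n)) ^ 2 * (1 + β * n) ^ 2 *
      ((2 : ℝ) ^ ((k + 1) * β * l) * ((8 / 5 : ℝ) ^ (β * (k + 1)) * ((16 / 25 : ℝ) ^ β) ^ n)) := by
        gcongr
    _ = _ := by ring

lemma summable_coeff {β : ℝ} (hβ : 0 < β) (C : ℝ) (k : ℕ) :
    Summable fun n : ℕ => ((n + k).choose k : ℝ) * C ^ 2 * (1 + β * (k + 1 + n)) ^ 2 *
      (1 + β * n) ^ 2 * (8 / 5 : ℝ) ^ (β * (k + 1)) * ((16 / 25 : ℝ) ^ β) ^ n := by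
  set r := (16 / 25 : ℝ) ^ β
  have hr0 : 0 < r := by positivity
  have hr1 : r < 1 := Real.rpow_lt_one (by norm_num) (by norm_num) hβ
  have h1 := (summable_nat_add_iff 1).mpr
    (summable_pow_mul_geometric_of_norm_lt_one (k + 4) (r := r)
      (by rwa [Real.norm_of_nonneg hr0.le]))
  refine Summable.of_nonneg_of_le (fun n => by positivity) (fun n => ?_)
    (h1.mul_left ((k + 1) ^ k * C ^ 2 * ((1 + β) * (k + 2)) ^ 2 * (1 + β) ^ 2 *
      (8 / 5 : ℝ) ^ (β * (k + 1)) * r⁻¹))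
  have hn : (0 : ℝ) ≤ n := n.cast_nonneg
  have hk : (0 : ℝ) ≤ k := k.cast_nonneg
  have c1 : ((n + k).choose k : ℝ) ≤ ((k + 1) * (n + 1)) ^ k := by
    have : ((n + k).choose k : ℝ) ≤ (n + k : ℝ) ^ k := by exact_mod_cast Nat.choose_le_pow (n + k) k
    refine this.trans ?_
    gcongr
    nlinarith [mul_nonneg hn hk]
  have c2 : 1 + β * (k + 1 + n) ≤ (1 + β) * (k + 2) * (n + 1) := by
    nlinarith [mul_nonneg hn hk, mul_nonneg hβ.le hn, mul_nonneg hβ.le hk,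
      mul_nonneg (mul_nonneg hβ.le hn) hk]
  have c3 : 1 + β * n ≤ (1 + β) * (n + 1) := by nlinarith
  calc _ ≤ ((k + 1) * (n + 1) : ℝ) ^ k * C ^ 2 * ((1 + β) * (k + 2) * (n + 1)) ^ 2 *
        ((1 + β) * (n + 1)) ^ 2 * (8 / 5 : ℝ) ^ (β * (k + 1)) * r ^ n := by gcongr
    _ = _ := by
      push_cast
      rw [mul_pow, pow_succ r n]
      field_simp
      ring

/-! ### The estimate -/

/-- **Nonresonant denominator estimate.** For `1 < α < 2`, `m ∈ ℤ₊` and `|j₁ - j₃| > 1`: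
`‖ψ_{j₁}(η₁)ψ_{j₂}(η₂)ψ_{j₃}(η₃) / (|η₁|^{1-α} - |η₃|^{1-α})^m‖_{S^∞}
  ≲ 2^{m(α-1) min{j₁,j₃}}`. -/
theorem nonresonant_symbol_bound (α : ℝ) (hα1 : 1 < α) (hα2 : α < 2)
    (ψ : ℝ → ℝ) (hψsm : ContDiff ℝ (⊤ : ℕ∞) ψ)
    (hψrange : ∀ ξ, ψ ξ ∈ Set.Icc (0 : ℝ) 1)
    (hψsupp : ∀ ξ, ψ ξ ≠ 0 → |ξ| ≤ 8 / 5)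
    (hψone : ∀ ξ, |ξ| ≤ 5 / 4 → ψ ξ = 1)
    (m : ℕ) (hm : 0 < m) :
    ∃ C > (0 : ℝ),
      ∀ j₁ j₂ j₃ : ℤ, 1 < |j₁ - j₃| →
        sInf3Norm
            (fun η₁ η₂ η₃ =>
              ((lpSymb ψ j₁ η₁ * lpSymb ψ j₂ η₂ * lpSymb ψ j₃ η₃
                  / (|η₁| ^ (1 - α) - |η₃| ^ (1 - α)) ^ m : ℝ) : ℂ))
          ≤ C * (2 : ℝ) ^ ((m : ℝ) * (α - 1) * ((min j₁ j₃ : ℤ) : ℝ)) := by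
  obtain ⟨k, rfl⟩ := Nat.exists_eq_succ_of_ne_zero hm.ne'
  obtain ⟨β, hβ⟩ : ∃ β, β = α - 1 := ⟨_, rfl⟩
  have hβ0 : 0 < β := by linarith
  rw [show 1 - α = -β by linarith, ← hβ]
  have ha := ann_lpSymb hψsupp hψone
  have hsm : ContDiff ℝ (⊤ : ℕ∞) (lpSymb ψ 0) := by unfold lpSymb; fun_prop
  obtain ⟨C, hC, hgood⟩ := good_power ha hsm
  have piece := fun (j : ℤ) (s : ℝ) => good_piece ha (hgood s) j
  have mid : ∀ j : ℤ, Good j C (lpSymb ψ j) := fun j => by simpa using piece j 0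
  have hU := summable_coeff hβ0 C k
  set U := fun n : ℕ => ((n + k).choose k : ℝ) * C ^ 2 * (1 + β * (k + 1 + n)) ^ 2 *
    (1 + β * n) ^ 2 * (8 / 5 : ℝ) ^ (β * (k + 1)) * ((16 / 25 : ℝ) ^ β) ^ n with hUdef
  have hU0 : 0 ≤ ∑' n, U n := tsum_nonneg fun n => by simp only [hUdef]; positivity
  refine ⟨π ^ 3 * C * (∑' n, U n + 1), by positivity, fun j₁ j₂ j₃ hj => ?_⟩
  -- A gap of two scales separates the annuli: `8/5 < 4 * (5/8)`.
  have sep : ∀ (l h : ℤ) (x z : ℝ), l + 2 ≤ h → lpSymb ψ l x ≠ 0 → lpSymb ψ h z ≠ 0 →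
      x ≠ 0 ∧ |x| < |z| := by
    intro l h x z hlh hx hz
    rw [lpSymb_eq] at hx hz
    have hx := ha _ hx
    have hz := ha _ hz
    have pl : (0 : ℝ) < 2 ^ l := by positivity
    have ph : (0 : ℝ) < 2 ^ h := by positivity
    rw [abs_div, abs_of_pos pl, le_div_iff₀ pl, div_le_iff₀ pl] at hx
    rw [abs_div, abs_of_pos ph, le_div_iff₀ ph, div_le_iff₀ ph] at hz
    have : (2 : ℝ) ^ l * 4 ≤ 2 ^ h := by
      calc (2 : ℝ) ^ l * 4 = 2 ^ (l + 2) := by rw [zpow_add₀ (by norm_num)]; norm_num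
        _ ≤ 2 ^ h := zpow_le_zpow_right₀ (by norm_num) hlh
    exact ⟨abs_pos.mp (by linarith), by linarith⟩
  have finish : ∀ (l : ℤ) (V : ℕ → ℝ), (∀ n, 0 ≤ V n) →
      (∀ n, V n ≤ (2 : ℝ) ^ ((k + 1) * β * l) * U n) →
      Summable V ∧ π ^ 3 * C * ∑' n, V n ≤
        π ^ 3 * C * (∑' n, U n + 1) * (2 : ℝ) ^ (((k.succ : ℕ) : ℝ) * β * l) := by
    intro l V hV0 hV
    have hs : Summable V := Summable.of_nonneg_of_le hV0 hV (hU.mul_left _)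
    refine ⟨hs, ?_⟩
    have h1 := hs.tsum_le_tsum hV (hU.mul_left _)
    rw [tsum_mul_left] at h1
    push_cast
    rw [mul_assoc (π ^ 3 * C)]
    gcongr
    refine h1.trans ?_
    rw [mul_comm]
    gcongr
    linarith
  rcases lt_or_ge j₁ j₃ with hlt | hge
  · have hlh : j₁ + 2 ≤ j₃ := by rw [abs_of_neg (by omega)] at hj; omega
    rw [min_eq_left hlt.le]
    obtain ⟨hs, hb⟩ := finish j₁ _ (fun n => by positivity) (coeff_bound (C := C) hβ0 k hlh)
    refine (sInf3Norm_tsum_le (fun n => piece j₁ (β * (k + 1 + n))) (mid j₂)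
      (fun n => piece j₃ (-(β * n))) hs fun x y z => ?_).trans hb
    by_cases h0 : lpSymb ψ j₁ x = 0 ∨ lpSymb ψ j₃ z = 0
    · rcases h0 with h0 | h0 <;> simp [h0, hasSum_zero]
    · obtain ⟨hx, hz⟩ := not_or.mp h0
      obtain ⟨hx0, hxz⟩ := sep _ _ x z hlh hx hz
      convert! (hasSum_denominator k hβ0 hx0 hxz).mul_left
        (lpSymb ψ j₁ x * lpSymb ψ j₂ y * lpSymb ψ j₃ z) using 1
      · ext n; ring
      · rw [Nat.succ_eq_add_one]; ring
  · have hlh : j₃ + 2 ≤ j₁ := by rw [abs_of_nonneg (by omega)] at hj; omega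
    rw [min_eq_right hge]
    -- The roles of the two frequencies are exchanged at the price of the sign `(-1) ^ (k + 1)`.
    obtain ⟨hs, hb⟩ := finish j₃
      (fun n => |(-1) ^ (k + 1) * ((n + k).choose k : ℝ)| *
        ((2 : ℝ) ^ (j₁ * (-(β * n))) *
          (C * ((1 + |-(β * n)|) ^ 2 * (8 / 5 : ℝ) ^ |-(β * n)|))) *
        ((2 : ℝ) ^ (j₃ * (β * (k + 1 + n))) *
          (C * ((1 + |β * (k + 1 + n)|) ^ 2 * (8 / 5 : ℝ) ^ |β * (k + 1 + n)|))))
      (fun n => by positivity) (fun n => by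
        refine le_trans (le_of_eq ?_) (coeff_bound (C := C) hβ0 k hlh n)
        rw [abs_mul, abs_pow, abs_neg, abs_one, one_pow, one_mul]; ring)
    refine (sInf3Norm_tsum_le (fun n => piece j₁ (-(β * n))) (mid j₂)
      (fun n => piece j₃ (β * (k + 1 + n))) hs fun x y z => ?_).trans hb
    by_cases h0 : lpSymb ψ j₁ x = 0 ∨ lpSymb ψ j₃ z = 0
    · rcases h0 with h0 | h0 <;> simp [h0, hasSum_zero]
    · obtain ⟨hx, hz⟩ := not_or.mp h0
      obtain ⟨hz0, hzx⟩ := sep _ _ z x hlh hz hx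
      convert! (hasSum_denominator k hβ0 hz0 hzx).mul_left
        ((-1) ^ (k + 1) * (lpSymb ψ j₁ x * lpSymb ψ j₂ y * lpSymb ψ j₃ z)) using 1
      · ext n; ring
      · have e : (|x| ^ (-β) - |z| ^ (-β)) ^ (k + 1) =
            (-1) ^ (k + 1) * (|z| ^ (-β) - |x| ^ (-β)) ^ (k + 1) := by
          rw [← mul_pow]; congr 1; ring
        rw [Nat.succ_eq_add_one, e, div_eq_mul_inv, mul_inv, ← inv_pow, inv_neg_one]
        ring
end
end

section
/- Let α ∈ (1,2). For each n ≥ 1 there is a constant C(n,α) such that for all η = (η₁,…,η_{2n+1}) ∈ ℝ^{2n+1} with |η₁| ≤ |η₂| ≤ ⋯ ≤ |η_{2n+1}|, the symbol T_n satisfies the pointwise bound |T_n(η)| ≤ C(n,α) ( ∏_{k=1}^{2n} |η_k| ) |η_{2n}|^{1−α}. -/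
/-!
The bound needs no cancellation. Each factor `1 - e^{iη_jζ}` has modulus at most
`min(2, |η_j ζ|)`. Put `a = |η_{2n}|` and `P = ∏_{k ≤ 2n} |η_k|`. Bounding the last factor by `2`,
the factor of index `2n` by `min(2, a|ζ|)`, and the remaining ones by `|η_k ζ|`, the integrand is
at most `2 P a^{2-α} H(a|ζ|)` with `H(t) = min(2, t) t^{α-3}`. The profile `H` behaves like
`t^{α-2}` at `0` and like `t^{α-3}` at infinity, so it is integrable because `1 < α < 2`,
and rescaling `ζ` by `a` turns `a^{2-α}` into `a^{1-α}`. When `a = 0` both sides vanish.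
-/

open MeasureTheory Real

noncomputable section

/-- The multilinear symbol
`T_n(η) = ∫ [∏_{j=1}^{2n+1} (1 - e^{iη_jζ})] ζ^{-(2n+1)} |ζ|^{α-1} sgn ζ dζ`. -/
def Tn (α : ℝ) (n : ℕ) (η : Fin (2 * n + 1) → ℝ) : ℂ :=
  ∫ ζ : ℝ,
    (∏ j, (1 - Complex.exp (Complex.I * (η j : ℝ) * ζ)))
      * ((|ζ| ^ (α - 1) * Real.sign ζ / ζ ^ (2 * n + 1) : ℝ) : ℂ)

/-- The integrable profile `H(t) = min(2, t) t^{α-3}` which, after rescaling, dominates the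
integrand of `Tn`. -/
def profile (α t : ℝ) : ℝ := min 2 t * t ^ (α - 3)

lemma integrable_profile_abs (α : ℝ) (hα1 : 1 < α) (hα2 : α < 2) :
    Integrable (fun ζ : ℝ => profile α |ζ|) := by
  have hmeas : Measurable (profile α) := by
    unfold profile; fun_prop
  have h : IntegrableOn (profile α) (Set.Ioi 0) := by
    rw [← Set.Ioc_union_Ioi_eq_Ioi (zero_le_one' ℝ)]
    refine IntegrableOn.union ?_ ?_
    · have h1 : IntegrableOn (fun t : ℝ => t ^ (α - 2)) (Set.Ioc 0 1) :=
        (intervalIntegrable_iff_integrableOn_Ioc_of_le zero_le_one).1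
          (intervalIntegral.intervalIntegrable_rpow' (by linarith))
      refine Integrable.mono' h1 hmeas.aestronglyMeasurable ?_
      filter_upwards [ae_restrict_mem measurableSet_Ioc] with t ht
      have ht0 : 0 < t := ht.1
      unfold profile
      rw [Real.norm_of_nonneg (by positivity)]
      calc min 2 t * t ^ (α - 3) ≤ t * t ^ (α - 3) := by gcongr; exact min_le_right _ _
        _ = t ^ (α - 2) := by
          rw [← Real.rpow_one_add' ht0.le (by linarith)]; ring_nf
    · have h1 : IntegrableOn (fun t : ℝ => 2 * t ^ (α - 3)) (Set.Ioi 1) :=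
        (integrableOn_Ioi_rpow_of_lt (by linarith) one_pos).const_mul 2
      refine Integrable.mono' h1 hmeas.aestronglyMeasurable ?_
      filter_upwards [ae_restrict_mem measurableSet_Ioi] with t ht
      have ht0 : 0 < t := lt_trans one_pos ht
      unfold profile
      rw [Real.norm_of_nonneg (by positivity)]
      gcongr
      exact min_le_left _ _
  have hpos : IntegrableOn (fun ζ : ℝ => profile α |ζ|) (Set.Ioi 0) :=
    h.congr_fun (fun t ht => by rw [abs_of_pos ht]) measurableSet_Ioi
  have hneg : IntegrableOn (fun ζ : ℝ => profile α |ζ|) (Set.Iic 0) := by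
    rw [← Measure.map_neg_eq_self (volume : Measure ℝ)]
    have m : MeasurableEmbedding fun x : ℝ => -x := (Homeomorph.neg ℝ).measurableEmbedding
    rw [m.integrableOn_map_iff]
    simp_rw [Function.comp_def, abs_neg, Set.neg_preimage, Set.neg_Iic, neg_zero]
    exact Iff.mpr integrableOn_Ici_iff_integrableOn_Ioi hpos
  rw [← integrableOn_univ, ← Set.Iic_union_Ioi (a := (0 : ℝ))]
  exact hneg.union hpos

lemma norm_factor_le_two (a ζ : ℝ) : ‖1 - Complex.exp (Complex.I * a * ζ)‖ ≤ 2 := by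
  have h : ‖Complex.exp (Complex.I * a * ζ)‖ = 1 := by
    rw [mul_assoc, ← Complex.ofReal_mul, Complex.norm_exp_I_mul_ofReal]
  calc _ ≤ ‖(1 : ℂ)‖ + ‖Complex.exp (Complex.I * a * ζ)‖ := norm_sub_le _ _
    _ = 2 := by rw [h, norm_one]; norm_num

lemma norm_factor_le_abs (a ζ : ℝ) :
    ‖1 - Complex.exp (Complex.I * a * ζ)‖ ≤ |a| * |ζ| := by
  rw [norm_sub_rev, mul_assoc, ← Complex.ofReal_mul, ← abs_mul]
  exact Real.norm_exp_I_mul_ofReal_sub_one_le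

lemma norm_kernel (α : ℝ) (n : ℕ) {ζ : ℝ} (hζ : ζ ≠ 0) :
    ‖((|ζ| ^ (α - 1) * Real.sign ζ / ζ ^ (2 * n + 1) : ℝ) : ℂ)‖
      = |ζ| ^ (α - 1) / |ζ| ^ (2 * n + 1) := by
  have hs : |Real.sign ζ| = 1 := by
    rcases Real.sign_apply_eq_of_ne_zero ζ hζ with h | h <;> simp [h]
  rw [Complex.norm_real, Real.norm_eq_abs, abs_div, abs_mul, hs, abs_pow, mul_one,
    abs_of_nonneg (Real.rpow_nonneg (abs_nonneg ζ) _)]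

/-- The pointwise domination of the integrand; `i₀` is the index of the factor for which both
bounds `2` and `|η ζ|` are kept. -/
lemma norm_integrand_le (α : ℝ) (n : ℕ) (η : Fin (2 * n + 1) → ℝ) (i₀ : Fin (2 * n))
    (ha : 0 < |η i₀.castSucc|) (ζ : ℝ) :
    ‖(∏ j, (1 - Complex.exp (Complex.I * (η j : ℝ) * ζ)))
      * ((|ζ| ^ (α - 1) * Real.sign ζ / ζ ^ (2 * n + 1) : ℝ) : ℂ)‖
      ≤ 2 * (∏ i : Fin (2 * n), |η i.castSucc|) * |η i₀.castSucc| ^ (2 - α)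
          * profile α |η i₀.castSucc * ζ| := by
  rcases eq_or_ne ζ 0 with rfl | hζ
  · simp [profile]
  have hx : 0 < |ζ| := abs_pos.2 hζ
  rw [norm_mul, norm_kernel α n hζ, norm_prod, Fin.prod_univ_castSucc,
    ← Finset.mul_prod_erase _ _ (Finset.mem_univ i₀),
    ← Finset.mul_prod_erase _ (fun i : Fin (2 * n) => |η i.castSucc|) (Finset.mem_univ i₀)]
  have hrest : ∏ i ∈ Finset.univ.erase i₀,
      ‖1 - Complex.exp (Complex.I * (η i.castSucc : ℝ) * ζ)‖
      ≤ (∏ i ∈ Finset.univ.erase i₀, |η i.castSucc|) * |ζ| ^ (2 * n - 1) := by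
    calc _ ≤ ∏ i ∈ Finset.univ.erase i₀, (|η i.castSucc| * |ζ|) :=
          Finset.prod_le_prod (fun _ _ => norm_nonneg _) fun i _ => norm_factor_le_abs _ _
      _ = _ := by
          rw [Finset.prod_mul_distrib, Finset.prod_const,
            Finset.card_erase_of_mem (Finset.mem_univ i₀), Finset.card_univ, Fintype.card_fin]
  have hcross := le_min (norm_factor_le_two (η i₀.castSucc) ζ)
    (norm_factor_le_abs (η i₀.castSucc) ζ)
  have hlast := norm_factor_le_two (η (Fin.last (2 * n))) ζ
  set Q := ∏ i ∈ Finset.univ.erase i₀, |η i.castSucc| with hQ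
  have hQ0 : 0 ≤ Q := Finset.prod_nonneg fun _ _ => abs_nonneg _
  rw [abs_mul]
  generalize |η i₀.castSucc| = a at *
  generalize |ζ| = x at *
  have hpow : x ^ (2 * n - 1) * (x ^ (α - 1) / x ^ (2 * n + 1)) = x ^ (α - 3) := by
    have hn : 2 * n + 1 = (2 * n - 1) + 2 := by have := i₀.pos; omega
    have h2 : x ^ (α - 1) = x ^ (α - 3) * x ^ 2 := by
      rw [← Real.rpow_natCast, ← Real.rpow_add hx]; push_cast; ring_nf
    rw [hn, pow_add, h2]
    field_simp
  have ha' : a * a ^ (2 - α) * a ^ (α - 3) = 1 := by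
    rw [mul_assoc, ← Real.rpow_add ha]
    norm_num
    rw [Real.rpow_neg_one, mul_inv_cancel₀ ha.ne']
  calc _ ≤ min 2 (a * x) * (Q * x ^ (2 * n - 1)) * 2 * (x ^ (α - 1) / x ^ (2 * n + 1)) := by
        gcongr
    _ = 2 * Q * min 2 (a * x) * (x ^ (2 * n - 1) * (x ^ (α - 1) / x ^ (2 * n + 1))) := by ring
    _ = 2 * Q * min 2 (a * x) * x ^ (α - 3) * (a * a ^ (2 - α) * a ^ (α - 3)) := by
        rw [hpow, ha', mul_one]
    _ = _ := by
        rw [profile, Real.mul_rpow ha.le hx.le]; ring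

/-- **Pointwise bound for `T_n`.** If `|η₁| ≤ |η₂| ≤ ⋯ ≤ |η_{2n+1}|`, then
`|T_n(η)| ≤ C(n,α) (∏_{k=1}^{2n} |η_k|) |η_{2n}|^{1-α}`. -/
theorem Tn_pointwise_bound (α : ℝ) (hα1 : 1 < α) (hα2 : α < 2)
    (n : ℕ) (hn : 1 ≤ n) :
    ∃ C > (0 : ℝ),
      ∀ η : Fin (2 * n + 1) → ℝ,
        (∀ i j : Fin (2 * n + 1), i ≤ j → |η i| ≤ |η j|) →
        ‖Tn α n η‖
          ≤ C * (∏ i : Fin (2 * n), |η i.castSucc|)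
              * |η ⟨2 * n - 1, by omega⟩| ^ (1 - α) := by
  have hI : 0 ≤ ∫ ζ : ℝ, profile α |ζ| :=
    integral_nonneg fun ζ => mul_nonneg (le_min zero_le_two (abs_nonneg ζ))
      (Real.rpow_nonneg (abs_nonneg ζ) _)
  refine ⟨2 * (∫ ζ : ℝ, profile α |ζ|) + 1, by positivity, fun η _ => ?_⟩
  let i₀ : Fin (2 * n) := ⟨2 * n - 1, by omega⟩
  change _ ≤ _ * |η i₀.castSucc| ^ (1 - α)
  have hP : 0 ≤ ∏ i : Fin (2 * n), |η i.castSucc| := Finset.prod_nonneg fun _ _ => abs_nonneg _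
  rcases eq_or_ne (η i₀.castSucc) 0 with h0 | h0
  · have hz : Tn α n η = 0 := by
      unfold Tn
      refine integral_eq_zero_of_ae (Filter.Eventually.of_forall fun ζ => ?_)
      have : ∏ j, (1 - Complex.exp (Complex.I * (η j : ℝ) * ζ)) = 0 :=
        Finset.prod_eq_zero (Finset.mem_univ i₀.castSucc) (by simp [h0])
      simp [this]
    rw [hz, norm_zero]
    positivity
  have ha : 0 < |η i₀.castSucc| := abs_pos.2 h0
  have hint := (integrable_profile_abs α hα1 hα2).comp_mul_left' h0
  have hscale : |η i₀.castSucc| ^ (2 - α) * |(η i₀.castSucc)⁻¹| = |η i₀.castSucc| ^ (1 - α) := by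
    rw [abs_inv, ← Real.rpow_neg_one, ← Real.rpow_add ha]; ring_nf
  calc ‖Tn α n η‖
      ≤ ∫ ζ : ℝ, 2 * (∏ i : Fin (2 * n), |η i.castSucc|) * |η i₀.castSucc| ^ (2 - α)
          * profile α |η i₀.castSucc * ζ| :=
        norm_integral_le_of_norm_le (hint.const_mul _)
          (Filter.Eventually.of_forall (norm_integrand_le α n η i₀ ha))
    _ = 2 * (∫ ζ : ℝ, profile α |ζ|) * (∏ i : Fin (2 * n), |η i.castSucc|)
          * |η i₀.castSucc| ^ (1 - α) := by
        rw [integral_const_mul, Measure.integral_comp_mul_left (fun t => profile α |t|),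
          smul_eq_mul, ← hscale]
        ring
    _ ≤ _ := by gcongr; linarith
end
end

section
/- Let α ∈ (1,2). For each n ≥ 1 there is a constant C(n,α) such that for all j₁,…,j_{2n+1} ∈ ℤ, ‖ F^{−1}[ T_n(η₁,…,η_{2n+1}) ψ_{j₁}(η₁)⋯ψ_{j_{2n+1}}(η_{2n+1}) ] ‖_{L¹(ℝ^{2n+1})} ≤ C(n,α) 2^{(2−α)ℓ₂ + ℓ₃ + ⋯ + ℓ_{2n+1}}, where ℓ₁ ≥ ℓ₂ ≥ ⋯ ≥ ℓ_{2n+1} is the decreasing rearrangement of (j₁,…,j_{2n+1}). -/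
/-!
For fixed `ζ` the symbol `∏ (1 - e^{iη_iζ}) ψ_{j_i}(η_i)` is a tensor product, whose inverse Fourier
transform is `∏ (φ_{j_i}(y_i) - φ_{j_i}(y_i + ζ))` with `φ_k` the inverse transform of `ψ_k`
(`inverse_fourier_Tn_eq`). Since the `φ_k` are dilates of one Schwartz function, each factor has
`L¹` norm at most a constant times `min(1, 2^{j_i}|ζ|)` (`lpKer_bounds`). By Minkowski's inequality
the `L¹` norm in question is bounded by a constant times
`∫ |ζ|^{α-1-(2n+1)} ∏ min(1, 2^{j_i}|ζ|) dζ`.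

In this integral the minima for `ℓ₃, …, ℓ_{2n+1}` are replaced by `2^{ℓ_i}|ζ|` and the one for `ℓ₁` by
`1`. What is left is `2^{ℓ₃+⋯+ℓ_{2n+1}} ∫ min(1, 2^{ℓ₂}|ζ|) |ζ|^{α-3} dζ`, which by scaling is a constant
times `2^{(2-α)ℓ₂+ℓ₃+⋯+ℓ_{2n+1}}`, the constant being finite because `1 < α < 2`
(`lintegral_tnMajorant_le`).
-/

open MeasureTheory Real
open scoped ENNReal

noncomputable section

open scoped FourierTransform

/-! ### Auxiliary integrals on the line -/

lemma lintegral_comp_mul_left_real (f : ℝ → ℝ≥0∞) (hf : Measurable f) {a : ℝ} (ha : a ≠ 0) :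
    ∫⁻ x, f (a * x) = ENNReal.ofReal |a⁻¹| * ∫⁻ x, f x := by
  rw [← lintegral_map (μ := volume) hf (measurable_const_mul a), Real.map_volume_mul_left ha,
    lintegral_smul_measure, smul_eq_mul]

/-- A translation by `h` moves a function in `L¹` by at most `|h|` times the `L¹` norm of its derivative. -/
lemma lintegral_translate_sub_le (Q Q' : ℝ → ℂ) (hd : ∀ x, HasDerivAt Q (Q' x) x)
    (hc : Continuous Q') (h : ℝ) :
    ∫⁻ u, ‖Q u - Q (u + h)‖ₑ ≤ ENNReal.ofReal |h| * ∫⁻ u, ‖Q' u‖ₑ := by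
  have key : ∀ u, ‖Q u - Q (u + h)‖ₑ ≤
      ∫⁻ t in Set.Ioc (0:ℝ) 1, ENNReal.ofReal |h| * ‖Q' (u + t * h)‖ₑ := by
    intro u
    have hD : ∀ t ∈ Set.uIcc (0:ℝ) 1,
        HasDerivAt (fun t : ℝ => Q (u + t * h)) ((h : ℂ) * Q' (u + t * h)) t := by
      intro t _
      have h1 : HasDerivAt (fun t : ℝ => u + t * h) h t := by
        simpa using ((hasDerivAt_id t).mul_const h).const_add u
      have := HasDerivAt.scomp t (hd (u + t * h)) h1
      simpa [Function.comp_def] using this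
    have hI := intervalIntegral.integral_eq_sub_of_hasDerivAt hD
      (by apply Continuous.intervalIntegrable; fun_prop)
    have h2 : Q u - Q (u + h) = - ∫ t in Set.Ioc (0:ℝ) 1, (h : ℂ) * Q' (u + t * h) := by
      rw [← intervalIntegral.integral_of_le zero_le_one, hI]
      simp
    rw [h2, enorm_neg]
    refine (enorm_integral_le_lintegral_enorm _).trans (le_of_eq ?_)
    refine lintegral_congr fun t => ?_
    rw [enorm_mul]
    congr 1
    rw [← ofReal_norm]; simp
  calc ∫⁻ u, ‖Q u - Q (u + h)‖ₑ
      ≤ ∫⁻ u, ∫⁻ t in Set.Ioc (0:ℝ) 1, ENNReal.ofReal |h| * ‖Q' (u + t * h)‖ₑ :=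
        lintegral_mono key
    _ = ∫⁻ t in Set.Ioc (0:ℝ) 1, ∫⁻ u, ENNReal.ofReal |h| * ‖Q' (u + t * h)‖ₑ := by
        apply lintegral_lintegral_swap
        have hm : Measurable Q' := hc.measurable
        apply Measurable.aemeasurable
        simp only [Function.uncurry_def]
        fun_prop
    _ = ∫⁻ t in Set.Ioc (0:ℝ) 1, ENNReal.ofReal |h| * ∫⁻ u, ‖Q' u‖ₑ := by
        refine lintegral_congr fun t => ?_
        rw [lintegral_const_mul' _ _ ENNReal.ofReal_ne_top,
          lintegral_add_right_eq_self (μ := volume) (fun u => ‖Q' u‖ₑ)]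
    _ = _ := by simp

/-- Integrability at `0` uses `α > 1`, integrability at infinity uses `α < 2`. -/
lemma integrable_min_mul_rpow {α : ℝ} (hα1 : 1 < α) (hα2 : α < 2) :
    Integrable (fun u : ℝ => min 1 |u| * |u| ^ (α - 3)) := by
  set g : ℝ → ℝ := fun u => min 1 |u| * |u| ^ (α - 3) with hg
  have hI : IntegrableOn g (Set.Ioi 0) := by
    rw [← Set.Ioc_union_Ioi_eq_Ioi (zero_le_one (α := ℝ))]
    refine IntegrableOn.union ?_ ?_
    · have h1 : IntegrableOn (fun u : ℝ => u ^ (α - 2)) (Set.Ioc 0 1) :=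
        (intervalIntegrable_iff_integrableOn_Ioc_of_le zero_le_one).1
          (intervalIntegral.intervalIntegrable_rpow' (by linarith))
      refine h1.congr_fun (fun u hu => ?_) measurableSet_Ioc
      have hu0 : 0 < u := hu.1
      simp only [hg, abs_of_pos hu0, min_eq_right hu.2]
      rw [show α - 2 = 1 + (α - 3) by ring, rpow_add hu0, rpow_one]
    · have h1 : IntegrableOn (fun u : ℝ => u ^ (α - 3)) (Set.Ioi 1) :=
        integrableOn_Ioi_rpow_of_lt (by linarith) zero_lt_one
      refine h1.congr_fun (fun u hu => ?_) measurableSet_Ioi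
      have hu1 : 1 < u := hu
      simp only [hg, abs_of_pos (zero_lt_one.trans hu1), min_eq_left hu1.le, one_mul]
  have h1 := (integrable_indicator_iff measurableSet_Ioi).2 hI
  refine (h1.add h1.comp_neg).congr ?_
  have h0 : ∀ᵐ u : ℝ, u ≠ 0 := by simp [ae_iff]
  filter_upwards [h0] with u hu
  rcases lt_or_gt_of_ne hu with h | h
  · simp [Set.indicator, h, h.le, hg]
  · simp [Set.indicator, h, h.le, hg]

lemma lintegral_min_mul_rpow {α A : ℝ} (hA : 0 < A) :
    ∫⁻ ζ : ℝ, ENNReal.ofReal (min 1 (A * |ζ|) * |ζ| ^ (α - 3)) =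
      ENNReal.ofReal (A ^ (2 - α)) *
        ∫⁻ u : ℝ, ENNReal.ofReal (min 1 |u| * |u| ^ (α - 3)) := by
  have h : ∀ ζ : ℝ, ENNReal.ofReal (min 1 (A * |ζ|) * |ζ| ^ (α - 3)) =
      ENNReal.ofReal (A ^ (3 - α)) * ENNReal.ofReal (min 1 |A * ζ| * |A * ζ| ^ (α - 3)) := by
    intro ζ
    rw [← ENNReal.ofReal_mul (by positivity), abs_mul, abs_of_pos hA,
      mul_rpow hA.le (abs_nonneg _), show 3 - α = -(α - 3) by ring, rpow_neg hA.le]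
    congr 1
    have : A ^ (α - 3) ≠ 0 := (rpow_pos_of_pos hA _).ne'
    field_simp
  simp_rw [h]
  rw [lintegral_const_mul' _ _ ENNReal.ofReal_ne_top,
    lintegral_comp_mul_left_real (fun u => ENNReal.ofReal (min 1 |u| * |u| ^ (α - 3)))
      (by fun_prop) hA.ne', ← mul_assoc, ← ENNReal.ofReal_mul (by positivity)]
  congr 2
  rw [abs_of_pos (by positivity), show 3 - α = (2 - α) + 1 by ring, rpow_add hA, rpow_one]
  field_simp

/-! ### The Littlewood–Paley kernels -/

/-- The (unnormalised) inverse Fourier transform `φ_k` of the Littlewood–Paley symbol `ψ_k`. -/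
def lpKer (ψ : ℝ → ℝ) (k : ℤ) (y : ℝ) : ℂ :=
  ∫ η : ℝ, (lpSymb ψ k η : ℂ) * Complex.exp (Complex.I * (η * y : ℝ))

lemma lpSymb_eq_scale (ψ : ℝ → ℝ) (k : ℤ) (ξ : ℝ) :
    lpSymb ψ k ξ = lpSymb ψ 0 (ξ / 2 ^ k) := by
  unfold lpSymb
  have : (2:ℝ) ^ (k - 1) = 2 ^ k * 2 ^ (0 - 1 : ℤ) := by
    rw [← zpow_add₀ two_ne_zero]; congr 1
  rw [this, zpow_zero, div_one, div_div]

lemma lpSymb_eq_zero {ψ : ℝ → ℝ} (hψsupp : ∀ ξ, ψ ξ ≠ 0 → |ξ| ≤ 8 / 5) {k : ℤ} {ξ : ℝ}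
    (h : 2 * 2 ^ k < |ξ|) : lpSymb ψ k ξ = 0 := by
  rw [lpSymb_eq_scale]
  have h2 : (0:ℝ) < 2 ^ k := by positivity
  have hξ : 2 < |ξ / 2 ^ k| := by
    rw [abs_div, abs_of_pos h2, lt_div_iff₀ h2]; exact h
  have z : ∀ x, 2 < |x| → ψ x = 0 := by
    intro x hx
    by_contra hne
    have := hψsupp x hne
    linarith
  unfold lpSymb
  rw [z _ (by simpa using hξ), z, sub_zero]
  rw [abs_div, show |(2:ℝ) ^ (0 - 1 : ℤ)| = 1 / 2 by norm_num]
  linarith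

lemma contDiff_lpSymb {ψ : ℝ → ℝ} (hψsm : ContDiff ℝ (⊤ : ℕ∞) ψ) (k : ℤ) :
    ContDiff ℝ (⊤ : ℕ∞) (lpSymb ψ k) := by
  unfold lpSymb
  fun_prop

lemma hasCompactSupport_lpSymb {ψ : ℝ → ℝ} (hψsupp : ∀ ξ, ψ ξ ≠ 0 → |ξ| ≤ 8 / 5) (k : ℤ) :
    HasCompactSupport (lpSymb ψ k) := by
  refine HasCompactSupport.intro (isCompact_closedBall (0:ℝ) (2 * 2 ^ k)) fun x hx => ?_
  apply lpSymb_eq_zero hψsupp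
  simpa using hx

lemma integrable_lpSymb {ψ : ℝ → ℝ} (hψsm : ContDiff ℝ (⊤ : ℕ∞) ψ)
    (hψsupp : ∀ ξ, ψ ξ ≠ 0 → |ξ| ≤ 8 / 5) (k : ℤ) : Integrable (lpSymb ψ k) :=
  (contDiff_lpSymb hψsm k).continuous.integrable_of_hasCompactSupport
    (hasCompactSupport_lpSymb hψsupp k)

/-- All `φ_k` are `L¹`-normalised dilates of a single Schwartz function. -/
lemma exists_schwartz_lpKer {ψ : ℝ → ℝ} (hψsm : ContDiff ℝ (⊤ : ℕ∞) ψ)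
    (hψsupp : ∀ ξ, ψ ξ ≠ 0 → |ξ| ≤ 8 / 5) :
    ∃ Q : SchwartzMap ℝ ℂ, ∀ k y, lpKer ψ k y = 2 ^ k * Q (-(2 ^ k / (2 * π)) * y) := by
  have hcs : HasCompactSupport (fun η : ℝ => (lpSymb ψ 0 η : ℂ)) :=
    (hasCompactSupport_lpSymb hψsupp 0).comp_left (g := fun x : ℝ => (x : ℂ)) (by simp)
  have hsm : ContDiff ℝ (⊤ : ℕ∞) (fun η : ℝ => (lpSymb ψ 0 η : ℂ)) :=
    Complex.ofRealCLM.contDiff.comp (contDiff_lpSymb hψsm 0)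
  refine ⟨𝓕 (hcs.toSchwartzMap hsm), fun k y => ?_⟩
  have h2 : (0:ℝ) < 2 ^ k := by positivity
  rw [SchwartzMap.fourier_coe, Real.fourier_real_eq_integral_exp_smul]
  unfold lpKer
  have := Measure.integral_comp_div (fun η : ℝ => (lpSymb ψ 0 η : ℂ) *
    Complex.exp (Complex.I * (η * (2 ^ k * y) : ℝ))) ((2:ℝ) ^ k)
  rw [abs_of_pos h2] at this
  convert this using 1
  · refine integral_congr_ae (.of_forall fun η => ?_)
    simp only
    rw [lpSymb_eq_scale]
    congr 4
    field_simp
  · rw [Complex.real_smul]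
    push_cast
    congr 1
    refine integral_congr_ae (.of_forall fun η => ?_)
    simp only [smul_eq_mul, HasCompactSupport.toSchwartzMap_toFun]
    rw [mul_comm]
    congr 2
    have : (π : ℂ) ≠ 0 := by exact_mod_cast pi_ne_zero
    field_simp

/-- Besides regularity of `φ_k`: `‖φ_k - φ_k(· + ζ)‖₁ ≲ min(1, 2^k|ζ|)` uniformly in `k`, the first bound
from the triangle inequality and the second from the mean value theorem. -/
lemma lpKer_bounds {ψ : ℝ → ℝ} (hψsm : ContDiff ℝ (⊤ : ℕ∞) ψ)
    (hψsupp : ∀ ξ, ψ ξ ≠ 0 → |ξ| ≤ 8 / 5) :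
    (∀ k, Continuous (lpKer ψ k)) ∧ (∀ k, Integrable (lpKer ψ k)) ∧
    ∃ K > (0:ℝ), ∀ k ζ, ∫⁻ y, ‖lpKer ψ k y - lpKer ψ k (y + ζ)‖ₑ ≤
      ENNReal.ofReal (K * min 1 (2 ^ k * |ζ|)) := by
  obtain ⟨Q, hQ⟩ := exists_schwartz_lpKer hψsm hψsupp
  have hfun : ∀ k, lpKer ψ k = fun y => 2 ^ k * Q (-(2 ^ k / (2 * π)) * y) :=
    fun k => funext (hQ k)
  have hc0 : ∀ k : ℤ, -((2:ℝ) ^ k / (2 * π)) ≠ 0 := fun k => by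
    have : (0:ℝ) < 2 ^ k / (2 * π) := by positivity
    linarith
  have hQc : Continuous Q := Q.continuous
  refine ⟨fun k => ?_, fun k => ?_, ?_⟩
  · rw [hfun]; fun_prop
  · rw [hfun]
    exact (Q.integrable.comp_mul_left' (hc0 k)).const_mul _
  set Q' := SchwartzMap.derivCLM ℂ ℂ Q
  have hQ'c : Continuous Q' := Q'.continuous
  have hder : ∀ x, HasDerivAt Q (Q' x) x := fun x => Q.differentiableAt.hasDerivAt
  set M := (∫ u, ‖Q u‖) with hM
  set M' := (∫ u, ‖Q' u‖) with hM'
  have hM0 : 0 ≤ M := integral_nonneg fun _ => norm_nonneg _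
  have hM0' : 0 ≤ M' := integral_nonneg fun _ => norm_nonneg _
  have eM : ∫⁻ u, ‖Q u‖ₑ = ENNReal.ofReal M :=
    (ofReal_integral_norm_eq_lintegral_enorm Q.integrable).symm
  have eM' : ∫⁻ u, ‖Q' u‖ₑ = ENNReal.ofReal M' :=
    (ofReal_integral_norm_eq_lintegral_enorm Q'.integrable).symm
  refine ⟨4 * π * M + M' + 1, by positivity, fun k ζ => ?_⟩
  have h2 : (0:ℝ) < 2 ^ k := by positivity
  set c := -((2:ℝ) ^ k / (2 * π)) with hc
  have hcabs : |c| = 2 ^ k / (2 * π) := by rw [hc, abs_neg, abs_of_pos (by positivity)]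
  have h1 : ∫⁻ y, ‖lpKer ψ k y - lpKer ψ k (y + ζ)‖ₑ =
      ENNReal.ofReal (2 * π) * ∫⁻ u, ‖Q u - Q (u + c * ζ)‖ₑ := by
    have : ∀ y, ‖lpKer ψ k y - lpKer ψ k (y + ζ)‖ₑ =
        ENNReal.ofReal (2 ^ k) * ‖Q (c * y) - Q (c * y + c * ζ)‖ₑ := by
      intro y
      rw [hQ, hQ, ← mul_sub, enorm_mul, ← mul_add]
      congr 1
      rw [← ofReal_norm, norm_zpow]; simp
    simp_rw [this]
    rw [lintegral_const_mul' _ _ ENNReal.ofReal_ne_top,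
      lintegral_comp_mul_left_real (fun u => ‖Q u - Q (u + c * ζ)‖ₑ)
        (by apply Continuous.measurable; fun_prop) (hc0 k), ← mul_assoc,
      ← ENNReal.ofReal_mul h2.le, abs_inv, hcabs]
    congr 2
    field_simp
  have b1 : ∫⁻ u, ‖Q u - Q (u + c * ζ)‖ₑ ≤ ENNReal.ofReal (2 * M) := by
    calc _ ≤ ∫⁻ u, (‖Q u‖ₑ + ‖Q (u + c * ζ)‖ₑ) := lintegral_mono fun u => enorm_sub_le
      _ = ENNReal.ofReal (2 * M) := by
        rw [lintegral_add_left (by apply Continuous.measurable; fun_prop),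
          lintegral_add_right_eq_self (μ := volume) (fun u => ‖Q u‖ₑ), eM,
          ← ENNReal.ofReal_add hM0 hM0, two_mul]
  have b2 : ∫⁻ u, ‖Q u - Q (u + c * ζ)‖ₑ ≤ ENNReal.ofReal (|c * ζ| * M') := by
    rw [ENNReal.ofReal_mul (abs_nonneg _), ← eM']
    exact lintegral_translate_sub_le Q Q' hder hQ'c _
  have hπ := pi_pos
  rw [h1]
  rcases le_total 1 (2 ^ k * |ζ|) with h | h
  · rw [min_eq_left h]
    refine (mul_le_mul_right b1 _).trans ?_
    rw [← ENNReal.ofReal_mul (by positivity)]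
    apply ENNReal.ofReal_le_ofReal
    linarith
  · rw [min_eq_right h]
    refine (mul_le_mul_right b2 _).trans ?_
    rw [← ENNReal.ofReal_mul (by positivity)]
    apply ENNReal.ofReal_le_ofReal
    rw [abs_mul, hcabs]
    have e : 2 * π * (2 ^ k / (2 * π) * |ζ| * M') = M' * (2 ^ k * |ζ|) := by field_simp
    rw [e]
    apply mul_le_mul_of_nonneg_right _ (by positivity)
    have : 0 ≤ 4 * π * M := by positivity
    linarith

/-! ### The integral in `ζ` -/

/-- The real weight `ζ^{-(2n+1)} |ζ|^{α-1} sgn ζ` in the integral defining `T_n`. -/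
def tnWeight (α : ℝ) (n : ℕ) (ζ : ℝ) : ℝ := |ζ| ^ (α - 1) * Real.sign ζ / ζ ^ (2 * n + 1)

lemma measurable_tnWeight (α : ℝ) (n : ℕ) : Measurable (tnWeight α n) := by
  have h : Measurable Real.sign := by
    unfold Real.sign
    refine Measurable.ite measurableSet_Iio measurable_const ?_
    exact Measurable.ite measurableSet_Ioi measurable_const measurable_const
  unfold tnWeight
  fun_prop

/-- The integrand `|w(ζ)| ∏ min(1, 2^{j_i}|ζ|)`, with `w` the weight of `T_n`. Up to factors
independent of `ζ` it dominates both the integrand on the Fourier side and the `L¹` norm in `y` of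
its inverse transform. -/
def tnMajorant (α : ℝ) (n : ℕ) (j : Fin (2 * n + 1) → ℤ) (ζ : ℝ) : ℝ :=
  |tnWeight α n ζ| * ∏ i, min 1 (2 ^ j i * |ζ|)

lemma tnMajorant_nonneg (α : ℝ) (n : ℕ) (j : Fin (2 * n + 1) → ℤ) (ζ : ℝ) :
    0 ≤ tnMajorant α n j ζ :=
  mul_nonneg (abs_nonneg _) (Finset.prod_nonneg fun i _ => by positivity)

lemma measurable_tnMajorant (α : ℝ) (n : ℕ) (j : Fin (2 * n + 1) → ℤ) :
    Measurable (tnMajorant α n j) := by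
  have := measurable_tnWeight α n
  unfold tnMajorant
  have h : Measurable fun ζ : ℝ => |tnWeight α n ζ| := this.abs
  fun_prop

lemma abs_tnWeight_le (α : ℝ) (n : ℕ) (ζ : ℝ) :
    |tnWeight α n ζ| ≤ |ζ| ^ (α - 1) / |ζ| ^ (2 * n + 1) := by
  unfold tnWeight
  rw [abs_div, abs_mul, abs_pow, abs_of_nonneg (rpow_nonneg (abs_nonneg ζ) _)]
  gcongr
  refine mul_le_of_le_one_right (by positivity) ?_
  rcases lt_trichotomy ζ 0 with h | h | h
  · simp [Real.sign_of_neg h]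
  · simp [h]
  · simp [Real.sign_of_pos h]

lemma card_filter_two_le (n : ℕ) (hn : 1 ≤ n) :
    (Finset.univ.filter (fun i : Fin (2 * n + 1) => 2 ≤ (i : ℕ))).card = 2 * n - 1 := by
  rw [Finset.card_filter, Fin.sum_univ_eq_sum_range (fun i => if 2 ≤ i then 1 else 0),
    ← Finset.card_filter]
  have h : (Finset.range (2 * n + 1)).filter (fun i => 2 ≤ i) = Finset.Ico 2 (2 * n + 1) := by
    ext i; simp; omega
  rw [h, Nat.card_Ico]
  omega

/-- The factors with index `≥ 2` are bounded by `2^{ℓ_i}|ζ|`, the one with index `0` by `1`, and the one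
with index `1` is kept; the powers of `|ζ|` then combine to `|ζ|^{α-3}`. -/
lemma tnMajorant_le {α : ℝ} {n : ℕ} (hn : 1 ≤ n) {j ℓ : Fin (2 * n + 1) → ℤ}
    {i₁ : Fin (2 * n + 1)} (hi₁ : (i₁ : ℕ) = 1)
    (hσ : ∃ σ : Equiv.Perm (Fin (2 * n + 1)), ∀ i, ℓ i = j (σ i)) {ζ : ℝ} (hζ : ζ ≠ 0) :
    tnMajorant α n j ζ ≤
      (∏ i ∈ Finset.univ.filter (fun i : Fin (2 * n + 1) => 2 ≤ (i : ℕ)), (2:ℝ) ^ ℓ i) *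
        (min 1 (2 ^ ℓ i₁ * |ζ|) * |ζ| ^ (α - 3)) := by
  obtain ⟨σ, hσ⟩ := hσ
  have hz : 0 < |ζ| := abs_pos.2 hζ
  have hperm : ∏ i, min 1 ((2:ℝ) ^ j i * |ζ|) = ∏ i, min 1 ((2:ℝ) ^ ℓ i * |ζ|) := by
    simp_rw [hσ]
    exact (Equiv.prod_comp σ (fun i => min 1 ((2:ℝ) ^ j i * |ζ|))).symm
  have hm0 : ∀ i, 0 ≤ min 1 ((2:ℝ) ^ ℓ i * |ζ|) := fun i => by positivity
  have hsplit : ∏ i, min 1 ((2:ℝ) ^ ℓ i * |ζ|) ≤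
      ((∏ i ∈ Finset.univ.filter (fun i : Fin (2 * n + 1) => 2 ≤ (i : ℕ)), (2:ℝ) ^ ℓ i) *
        |ζ| ^ (2 * n - 1)) * min 1 (2 ^ ℓ i₁ * |ζ|) := by
    rw [← Finset.prod_filter_mul_prod_filter_not Finset.univ
      (fun i : Fin (2 * n + 1) => 2 ≤ (i : ℕ))]
    refine mul_le_mul ?_ ?_ (Finset.prod_nonneg fun i _ => hm0 i) (by positivity)
    · rw [← card_filter_two_le n hn, ← Finset.prod_const, ← Finset.prod_mul_distrib]
      exact Finset.prod_le_prod (fun i _ => hm0 i) fun i _ => min_le_right _ _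
    · have hmem : i₁ ∈
          Finset.univ.filter (fun i : Fin (2 * n + 1) => ¬ 2 ≤ (i : ℕ)) := by simp [hi₁]
      rw [← Finset.mul_prod_erase _ _ hmem]
      exact mul_le_of_le_one_right (hm0 _)
        (Finset.prod_le_one (fun i _ => hm0 i) fun i _ => min_le_left _ _)
  have hpow : |ζ| ^ (α - 1) / |ζ| ^ (2 * n + 1) * |ζ| ^ (2 * n - 1) = |ζ| ^ (α - 3) := by
    rw [show 2 * n + 1 = (2 * n - 1) + 2 by omega, pow_add,
      show α - 3 = (α - 1) - (2 : ℕ) by push_cast; ring, rpow_sub_natCast hz.ne']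
    field_simp
  unfold tnMajorant
  rw [hperm]
  calc _ ≤ (|ζ| ^ (α - 1) / |ζ| ^ (2 * n + 1)) * (((∏ i ∈ Finset.univ.filter
            (fun i : Fin (2 * n + 1) => 2 ≤ (i : ℕ)), (2:ℝ) ^ ℓ i) *
          |ζ| ^ (2 * n - 1)) * min 1 (2 ^ ℓ i₁ * |ζ|)) :=
        mul_le_mul (abs_tnWeight_le α n ζ) hsplit (Finset.prod_nonneg fun i _ => hm0 i)
          (by positivity)
    _ = _ := by rw [← hpow]; ring

lemma lintegral_tnMajorant_le {α : ℝ} (hα1 : 1 < α) (hα2 : α < 2) {n : ℕ} (hn : 1 ≤ n)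
    {j ℓ : Fin (2 * n + 1) → ℤ}
    {i₁ : Fin (2 * n + 1)} (hi₁ : (i₁ : ℕ) = 1)
    (hσ : ∃ σ : Equiv.Perm (Fin (2 * n + 1)), ∀ i, ℓ i = j (σ i)) :
    ∫⁻ ζ, ENNReal.ofReal (tnMajorant α n j ζ) ≤
      ENNReal.ofReal ((∫ u : ℝ, min 1 |u| * |u| ^ (α - 3)) * (2 : ℝ) ^
        ((2 - α) * ((ℓ i₁ : ℤ) : ℝ)
          + ∑ i ∈ Finset.univ.filter (fun i : Fin (2 * n + 1) => 2 ≤ (i : ℕ)),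
              ((ℓ i : ℤ) : ℝ))) := by
  set P := ∏ i ∈ Finset.univ.filter (fun i : Fin (2 * n + 1) => 2 ≤ (i : ℕ)), (2:ℝ) ^ ℓ i
    with hP
  have hP0 : 0 ≤ P := Finset.prod_nonneg fun i _ => by positivity
  set A : ℝ := 2 ^ ℓ i₁ with hA
  have hA0 : 0 < A := by positivity
  have h0 : ∀ᵐ u : ℝ, u ≠ 0 := by simp [ae_iff]
  calc ∫⁻ ζ, ENNReal.ofReal (tnMajorant α n j ζ)
      ≤ ∫⁻ ζ : ℝ, ENNReal.ofReal P * ENNReal.ofReal (min 1 (A * |ζ|) * |ζ| ^ (α - 3)) := by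
        refine lintegral_mono_ae ?_
        filter_upwards [h0] with ζ hζ
        rw [← ENNReal.ofReal_mul hP0]
        exact ENNReal.ofReal_le_ofReal (tnMajorant_le hn hi₁ hσ hζ)
    _ = ENNReal.ofReal P * (ENNReal.ofReal (A ^ (2 - α)) *
          ENNReal.ofReal (∫ u : ℝ, min 1 |u| * |u| ^ (α - 3))) := by
        rw [lintegral_const_mul' _ _ ENNReal.ofReal_ne_top, lintegral_min_mul_rpow hA0,
          ofReal_integral_eq_lintegral_ofReal (integrable_min_mul_rpow hα1 hα2)
            (.of_forall fun u => by positivity)]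
    _ = _ := by
        rw [← ENNReal.ofReal_mul (by positivity), ← ENNReal.ofReal_mul hP0]
        congr 1
        rw [rpow_add two_pos, rpow_sum_of_pos two_pos, mul_comm (2 - α), rpow_mul two_pos.le]
        simp only [rpow_intCast]
        ring

lemma integrable_tnMajorant {α : ℝ} (hα1 : 1 < α) (hα2 : α < 2) {n : ℕ} (hn : 1 ≤ n)
    (j : Fin (2 * n + 1) → ℤ) : Integrable (tnMajorant α n j) := by
  refine ⟨(measurable_tnMajorant α n j).aestronglyMeasurable, ?_⟩
  rw [hasFiniteIntegral_iff_ofReal (.of_forall (tnMajorant_nonneg α n j))]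
  obtain ⟨i₁, hi₁⟩ : ∃ i : Fin (2 * n + 1), (i : ℕ) = 1 := ⟨⟨1, by omega⟩, rfl⟩
  exact (lintegral_tnMajorant_le hα1 hα2 hn (ℓ := j) hi₁ ⟨Equiv.refl _, fun i => rfl⟩).trans_lt
    ENNReal.ofReal_lt_top

/-! ### The kernel as a superposition of tensor products -/

lemma norm_one_sub_exp_mul_lpSymb_le {ψ : ℝ → ℝ} (hψsupp : ∀ ξ, ψ ξ ≠ 0 → |ξ| ≤ 8 / 5)
    (k : ℤ) (η ζ : ℝ) :
    ‖(1 - Complex.exp (Complex.I * η * ζ)) * (lpSymb ψ k η : ℂ)‖ ≤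
      min 1 (2 ^ k * |ζ|) * (2 * |lpSymb ψ k η|) := by
  rcases lt_or_ge (2 * 2 ^ k) |η| with h | h
  · simp [lpSymb_eq_zero hψsupp h]
  rw [norm_mul, Complex.norm_real, Real.norm_eq_abs, ← mul_assoc]
  refine mul_le_mul_of_nonneg_right ?_ (abs_nonneg _)
  have e : Complex.I * η * ζ = Complex.I * ((η * ζ : ℝ) : ℂ) := by push_cast; ring
  rw [norm_sub_rev, e]
  rw [min_mul_of_nonneg _ _ two_pos.le]
  refine le_min ?_ ?_
  · refine (norm_sub_le _ _).trans ?_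
    rw [mul_comm Complex.I, Complex.norm_exp_ofReal_mul_I]
    norm_num
  · refine norm_exp_I_mul_ofReal_sub_one_le.trans ?_
    rw [Real.norm_eq_abs, abs_mul]
    nlinarith [abs_nonneg ζ]

lemma integrable_tnIntegrand {α : ℝ} (hα1 : 1 < α) (hα2 : α < 2)
    {ψ : ℝ → ℝ} (hψsm : ContDiff ℝ (⊤ : ℕ∞) ψ) (hψsupp : ∀ ξ, ψ ξ ≠ 0 → |ξ| ≤ 8 / 5)
    {n : ℕ} (hn : 1 ≤ n) (j : Fin (2 * n + 1) → ℤ) (y : Fin (2 * n + 1) → ℝ) :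
    Integrable (Function.uncurry fun (η : Fin (2 * n + 1) → ℝ) (ζ : ℝ) =>
      (tnWeight α n ζ : ℂ) * ∏ i, ((1 - Complex.exp (Complex.I * (η i : ℝ) * ζ)) *
        (lpSymb ψ (j i) (η i) : ℂ) * Complex.exp (Complex.I * (η i * y i : ℝ))))
      (volume.prod volume) := by
  have hlp : ∀ i, Continuous (lpSymb ψ (j i)) := fun i => (contDiff_lpSymb hψsm (j i)).continuous
  have hw := measurable_tnWeight α n
  have hdom : Integrable (fun z : (Fin (2 * n + 1) → ℝ) × ℝ =>
      (∏ i, (2 * |lpSymb ψ (j i) (z.1 i)|)) * tnMajorant α n j z.2) (volume.prod volume) := by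
    refine Integrable.mul_prod (f := fun η : Fin (2 * n + 1) → ℝ =>
      ∏ i, (2 * |lpSymb ψ (j i) (η i)|)) ?_ (integrable_tnMajorant hα1 hα2 hn j)
    exact Integrable.fintype_prod (f := fun i (x : ℝ) => 2 * |lpSymb ψ (j i) x|)
      fun i => (integrable_lpSymb hψsm hψsupp (j i)).abs.const_mul 2
  refine hdom.mono' ?_ (.of_forall fun z => ?_)
  · simp only [Function.uncurry_def]
    refine AEStronglyMeasurable.mul ?_ ?_
    · have : Measurable fun z : (Fin (2 * n + 1) → ℝ) × ℝ => (tnWeight α n z.2 : ℂ) := by fun_prop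
      exact this.aestronglyMeasurable
    · apply Continuous.aestronglyMeasurable
      fun_prop
  · simp only [Function.uncurry_def]
    rw [norm_mul, norm_prod, Complex.norm_real, Real.norm_eq_abs, tnMajorant, mul_left_comm,
      ← Finset.prod_mul_distrib]
    refine mul_le_mul_of_nonneg_left ?_ (abs_nonneg _)
    refine Finset.prod_le_prod (fun i _ => norm_nonneg _) fun i _ => ?_
    rw [norm_mul, mul_comm Complex.I ((_ * _ : ℝ) : ℂ), Complex.norm_exp_ofReal_mul_I, mul_one,
      mul_comm (2 * _)]
    exact norm_one_sub_exp_mul_lpSymb_le hψsupp _ _ _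

lemma integral_one_sub_exp_mul_lpSymb {ψ : ℝ → ℝ} (hψsm : ContDiff ℝ (⊤ : ℕ∞) ψ)
    (hψsupp : ∀ ξ, ψ ξ ≠ 0 → |ξ| ≤ 8 / 5) (k : ℤ) (y ζ : ℝ) :
    ∫ η : ℝ, (1 - Complex.exp (Complex.I * η * ζ)) * (lpSymb ψ k η : ℂ) *
      Complex.exp (Complex.I * (η * y : ℝ)) = lpKer ψ k y - lpKer ψ k (y + ζ) := by
  have hint : ∀ y : ℝ, Integrable fun η : ℝ =>
      (lpSymb ψ k η : ℂ) * Complex.exp (Complex.I * (η * y : ℝ)) := by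
    intro y
    have hc : Continuous (lpSymb ψ k) := (contDiff_lpSymb hψsm k).continuous
    refine (integrable_lpSymb hψsm hψsupp k).mono (by apply Continuous.aestronglyMeasurable; fun_prop)
      (.of_forall fun η => ?_)
    rw [norm_mul, mul_comm Complex.I, Complex.norm_exp_ofReal_mul_I, mul_one, Complex.norm_real]
  unfold lpKer
  rw [← integral_sub (hint _) (hint _)]
  refine integral_congr_ae (.of_forall fun η => ?_)
  have e : Complex.exp (Complex.I * (η * (y + ζ) : ℝ)) =
      Complex.exp (Complex.I * η * ζ) * Complex.exp (Complex.I * (η * y : ℝ)) := by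
    rw [← Complex.exp_add]; congr 1; push_cast; ring
  simp only [e]
  ring

/-- Interchanging the `η` and `ζ` integrals, the kernel is a superposition in `ζ` of tensor products of
differences `φ_{j_i} - φ_{j_i}(· + ζ)`. -/
lemma inverse_fourier_Tn_eq {α : ℝ} (hα1 : 1 < α) (hα2 : α < 2)
    {ψ : ℝ → ℝ} (hψsm : ContDiff ℝ (⊤ : ℕ∞) ψ) (hψsupp : ∀ ξ, ψ ξ ≠ 0 → |ξ| ≤ 8 / 5)
    {n : ℕ} (hn : 1 ≤ n) (j : Fin (2 * n + 1) → ℤ) (y : Fin (2 * n + 1) → ℝ) :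
    ∫ η : Fin (2 * n + 1) → ℝ,
      Tn α n η * ((∏ i, lpSymb ψ (j i) (η i) : ℝ) : ℂ)
        * Complex.exp (Complex.I * (∑ i, η i * y i : ℝ)) =
    ∫ ζ : ℝ, (tnWeight α n ζ : ℂ) * ∏ i, (lpKer ψ (j i) (y i) - lpKer ψ (j i) (y i + ζ)) := by
  calc _ = ∫ η : Fin (2 * n + 1) → ℝ, ∫ ζ : ℝ,
      (tnWeight α n ζ : ℂ) * ∏ i, ((1 - Complex.exp (Complex.I * (η i : ℝ) * ζ)) *
        (lpSymb ψ (j i) (η i) : ℂ) * Complex.exp (Complex.I * (η i * y i : ℝ))) := by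
        refine integral_congr_ae (.of_forall fun η => ?_)
        simp only [Tn]
        rw [← integral_mul_const, ← integral_mul_const]
        refine integral_congr_ae (.of_forall fun ζ => ?_)
        simp only [tnWeight]
        rw [Finset.prod_mul_distrib, Finset.prod_mul_distrib, ← Complex.exp_sum,
          ← Finset.mul_sum, Complex.ofReal_prod, Complex.ofReal_sum]
        ring
    _ = _ := by
        rw [integral_integral_swap (integrable_tnIntegrand hα1 hα2 hψsm hψsupp hn j y)]
        refine integral_congr_ae (.of_forall fun ζ => ?_)
        simp only
        rw [integral_const_mul, integral_fintype_prod_volume_eq_prod (fun i (x : ℝ) =>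
          (1 - Complex.exp (Complex.I * x * ζ)) *
            (lpSymb ψ (j i) x : ℂ) * Complex.exp (Complex.I * (x * y i : ℝ)))]
        simp_rw [integral_one_sub_exp_mul_lpSymb hψsm hψsupp]

lemma lintegral_enorm_prod {ι : Type*} [Fintype ι] (f : ι → ℝ → ℂ)
    (hf : ∀ i, Integrable (f i)) :
    ∫⁻ y : ι → ℝ, ‖∏ i, f i (y i)‖ₑ = ∏ i, ∫⁻ x, ‖f i x‖ₑ := by
  have h1 : Integrable (fun y : ι → ℝ => ∏ i, f i (y i)) := Integrable.fintype_prod hf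
  rw [← ofReal_integral_norm_eq_lintegral_enorm h1]
  simp_rw [norm_prod]
  rw [integral_fintype_prod_volume_eq_prod (fun i (x : ℝ) => ‖f i x‖),
    ENNReal.ofReal_prod_of_nonneg fun i _ => integral_nonneg fun _ => norm_nonneg _]
  exact Finset.prod_congr rfl fun i _ => ofReal_integral_norm_eq_lintegral_enorm (hf i)

/-! ### The `L¹` estimate -/

/-- **`L¹` bound for the dyadically localized `T_n`.** If `ℓ` is the decreasing rearrangement
of `(j₁,…,j_{2n+1})`, then
`‖F^{-1}[T_n ψ_{j₁}(η₁)⋯ψ_{j_{2n+1}}(η_{2n+1})]‖_{L¹(ℝ^{2n+1})}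
  ≤ C(n,α) 2^{(2-α)ℓ₂ + ℓ₃ + ⋯ + ℓ_{2n+1}}`. -/
theorem Tn_localized_L1_bound (α : ℝ) (hα1 : 1 < α) (hα2 : α < 2)
    (ψ : ℝ → ℝ) (hψsm : ContDiff ℝ (⊤ : ℕ∞) ψ)
    (hψrange : ∀ ξ, ψ ξ ∈ Set.Icc (0 : ℝ) 1)
    (hψsupp : ∀ ξ, ψ ξ ≠ 0 → |ξ| ≤ 8 / 5)
    (hψone : ∀ ξ, |ξ| ≤ 5 / 4 → ψ ξ = 1)
    (n : ℕ) (hn : 1 ≤ n) :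
    ∃ C > (0 : ℝ),
      ∀ j ℓ : Fin (2 * n + 1) → ℤ,
        (∀ i i' : Fin (2 * n + 1), i ≤ i' → ℓ i' ≤ ℓ i) →
        (∃ σ : Equiv.Perm (Fin (2 * n + 1)), ∀ i, ℓ i = j (σ i)) →
        eLpNorm
            (fun y : Fin (2 * n + 1) → ℝ =>
              ∫ η : Fin (2 * n + 1) → ℝ,
                Tn α n η * ((∏ i, lpSymb ψ (j i) (η i) : ℝ) : ℂ)
                  * Complex.exp (Complex.I * (∑ i, η i * y i : ℝ))) 1 volume
          ≤ ENNReal.ofReal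
              (C * (2 : ℝ) ^
                ((2 - α) * ((ℓ ⟨1, by omega⟩ : ℤ) : ℝ)
                  + ∑ i ∈ Finset.univ.filter (fun i : Fin (2 * n + 1) => 2 ≤ (i : ℕ)),
                      ((ℓ i : ℤ) : ℝ))) := by
  obtain ⟨hKc, hKi, K, hK0, hK⟩ := lpKer_bounds hψsm hψsupp
  set I := ∫ u : ℝ, min 1 |u| * |u| ^ (α - 3) with hI
  have hI0 : 0 ≤ I := integral_nonneg fun u => by positivity
  refine ⟨K ^ (2 * n + 1) * (I + 1), by positivity, fun j ℓ _ hσ => ?_⟩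
  have hw := measurable_tnWeight α n
  simp_rw [eLpNorm_one_eq_lintegral_enorm, inverse_fourier_Tn_eq hα1 hα2 hψsm hψsupp hn j]
  have hslice : ∀ ζ : ℝ, ∫⁻ y : Fin (2 * n + 1) → ℝ, ‖(tnWeight α n ζ : ℂ) *
      ∏ i, (lpKer ψ (j i) (y i) - lpKer ψ (j i) (y i + ζ))‖ₑ ≤
      ENNReal.ofReal (K ^ (2 * n + 1)) * ENNReal.ofReal (tnMajorant α n j ζ) := by
    intro ζ
    simp_rw [enorm_mul]
    rw [lintegral_const_mul' _ _ enorm_ne_top,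
      lintegral_enorm_prod (fun i x => lpKer ψ (j i) x - lpKer ψ (j i) (x + ζ))
        fun i => (hKi _).sub ((hKi _).comp_add_right ζ)]
    calc _ ≤ ENNReal.ofReal |tnWeight α n ζ| *
          ∏ i, ENNReal.ofReal (K * min 1 (2 ^ j i * |ζ|)) := by
          refine mul_le_mul' (le_of_eq ?_) (Finset.prod_le_prod' fun i _ => hK _ _)
          rw [← ofReal_norm, Complex.norm_real, Real.norm_eq_abs]
      _ = _ := by
          rw [← ENNReal.ofReal_prod_of_nonneg fun i _ => by positivity,
            ← ENNReal.ofReal_mul (abs_nonneg _), ← ENNReal.ofReal_mul (by positivity),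
            Finset.prod_mul_distrib, tnMajorant]
          congr 1
          simp only [Finset.prod_const, Finset.card_univ, Fintype.card_fin]
          ring
  calc _ ≤ ∫⁻ y : Fin (2 * n + 1) → ℝ, ∫⁻ ζ : ℝ, ‖(tnWeight α n ζ : ℂ) *
          ∏ i, (lpKer ψ (j i) (y i) - lpKer ψ (j i) (y i + ζ))‖ₑ :=
        lintegral_mono fun y => enorm_integral_le_lintegral_enorm _
    _ = ∫⁻ ζ : ℝ, ∫⁻ y : Fin (2 * n + 1) → ℝ, ‖(tnWeight α n ζ : ℂ) *
          ∏ i, (lpKer ψ (j i) (y i) - lpKer ψ (j i) (y i + ζ))‖ₑ := by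
        apply lintegral_lintegral_swap
        simp only [Function.uncurry_def]
        refine AEMeasurable.enorm (AEMeasurable.mul ?_ ?_)
        · apply Measurable.aemeasurable
          fun_prop
        · apply Measurable.aemeasurable
          apply Continuous.measurable
          fun_prop
    _ ≤ ∫⁻ ζ : ℝ, ENNReal.ofReal (K ^ (2 * n + 1)) * ENNReal.ofReal (tnMajorant α n j ζ) :=
        lintegral_mono hslice
    _ = ENNReal.ofReal (K ^ (2 * n + 1)) * ∫⁻ ζ : ℝ, ENNReal.ofReal (tnMajorant α n j ζ) :=
        lintegral_const_mul' _ _ ENNReal.ofReal_ne_top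
    _ ≤ _ := by
        refine (mul_le_mul_right (lintegral_tnMajorant_le hα1 hα2 hn (i₁ := ⟨1, by omega⟩) rfl hσ) _).trans ?_
        rw [← ENNReal.ofReal_mul (by positivity), mul_assoc]
        refine ENNReal.ofReal_le_ofReal ?_
        gcongr
        linarith
end
end

section
/- Let α ∈ (1,2). For every c ∈ ℝ, ∫₀^∞ [ (s² + 1)^{−(2−α)/2} − (s² + c²)^{−(2−α)/2} ] ds = ( √π Γ((1−α)/2) / (2 Γ(1 − α/2)) ) (1 − |c|^{α−1}), the integral being absolutely convergent. -/
open MeasureTheory Real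

noncomputable section

/-! The negative power is a Gamma integral, `Γ(β) x^{-β} = ∫₀^∞ t^{β-1} e^{-tx} dt`, with
`β = (2-α)/2`. Comparing both powers in the statement with `(s²)^{-β}` reduces the claim to the
evaluation, for `b ≥ 0`, of

`∫₀^∞ [(s²)^{-β} - (s²+b)^{-β}] ds`
`  = (1/Γ(β)) ∫₀^∞ t^{β-1} (1 - e^{-bt}) ∫₀^∞ e^{-ts²} ds dt`
`  = (√π / (2Γ(β))) ∫₀^∞ t^{γ-1} (1 - e^{-bt}) dt`, where `γ = β - 1/2 = (1-α)/2 ∈ (-1/2, 0)`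

(`integral_sq_rpow_sub`). Writing `1 - e^{-bt} = ∫₀^b t e^{-ut} du` and exchanging the integrals
once more, the last integral is `Γ(γ+1) ∫₀^b u^{-γ-1} du = -Γ(γ) b^{-γ}`
(`integral_rpow_mul_one_sub_exp`). All integrands are nonnegative, so both exchanges, together with
absolute convergence, follow from Tonelli's theorem (`tonelli_swap`). The theorem is the
difference of the cases `b = c²` and `b = 1`. -/

/-- Tonelli's theorem with the inner integrals `A` and `B` already evaluated: integrability of one
iterated integral gives that of the other, and their values agree. -/
lemma tonelli_swap {S T : Set ℝ} (hS : MeasurableSet S) (hT : MeasurableSet T)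
    (g : ℝ → ℝ → ℝ) (hg : Measurable (Function.uncurry g)) (A B : ℝ → ℝ)
    (h0 : ∀ x ∈ S, ∀ y ∈ T, 0 ≤ g x y)
    (hA : ∀ x ∈ S, ∫ y in T, g x y = A x)
    (hBi : ∀ y ∈ T, IntegrableOn (fun x => g x y) S)
    (hB : ∀ y ∈ T, ∫ x in S, g x y = B y)
    (hBint : IntegrableOn B T) :
    IntegrableOn A S ∧ ∫ x in S, A x = ∫ y in T, B y := by
  have hint : Integrable (Function.uncurry g)
      ((volume.restrict S).prod (volume.restrict T)) := by
    rw [integrable_prod_iff' hg.aestronglyMeasurable]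
    refine ⟨(ae_restrict_mem hT).mono fun y hy => hBi y hy, ?_⟩
    refine hBint.congr_fun_ae ?_
    filter_upwards [ae_restrict_mem hT] with y hy
    rw [← hB y hy]
    refine setIntegral_congr_fun hS fun x hx => ?_
    simp [abs_of_nonneg (h0 x hx y hy)]
  constructor
  · refine hint.integral_prod_left.congr ?_
    filter_upwards [ae_restrict_mem hS] with x hx
    exact hA x hx
  · rw [← setIntegral_congr_fun hS hA, ← setIntegral_congr_fun hT hB]
    exact integral_integral_swap hint

lemma integrableOn_rpow_mul_exp {a r : ℝ} (ha : 0 < a) (hr : 0 < r) :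
    IntegrableOn (fun t : ℝ => t ^ (a - 1) * exp (-(r * t))) (Set.Ioi 0) := by
  have := integrableOn_rpow_mul_exp_neg_mul_rpow (s := a - 1) (p := 1) (b := r)
    (by linarith) one_pos hr
  simpa using this

/-- For `-1 < γ < 0` the Gamma integral at the negative argument `γ` converges after subtracting
the leading term of the exponential, and still produces `Γ(γ)`. -/
lemma integral_rpow_mul_one_sub_exp {γ b : ℝ} (h1 : -1 < γ) (h2 : γ < 0) (hb : 0 ≤ b) :
    IntegrableOn (fun t : ℝ => t ^ (γ - 1) * (1 - exp (-(b * t)))) (Set.Ioi 0) ∧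
    ∫ t in Set.Ioi (0 : ℝ), t ^ (γ - 1) * (1 - exp (-(b * t))) = -Gamma γ * b ^ (-γ) := by
  have hpow : IntervalIntegrable (fun u : ℝ => u ^ (-γ - 1)) volume 0 b :=
    intervalIntegral.intervalIntegrable_rpow' (by linarith)
  have key := tonelli_swap (S := Set.Ioi 0) (T := Set.Ioc 0 b) measurableSet_Ioi
    measurableSet_Ioc (fun t u => t ^ γ * exp (-(u * t)))
    (by unfold Function.uncurry; fun_prop)
    (fun t => t ^ (γ - 1) * (1 - exp (-(b * t))))
    (fun u => Gamma (γ + 1) * u ^ (-γ - 1))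
    (fun t ht u hu => by
      have : (0 : ℝ) < t := ht
      positivity)
    (fun t ht => by
      have ht : (0 : ℝ) < t := ht
      rw [integral_const_mul, ← intervalIntegral.integral_of_le hb,
        intervalIntegral.integral_eq_sub_of_hasDerivAt
          (f := fun u => -(exp (-(u * t)) / t)) (f' := fun u => exp (-(u * t)))]
      · rw [rpow_sub_one ht.ne']
        simp
        field_simp
        ring
      · intro u _
        have := ((((hasDerivAt_id u).mul_const t).neg.exp).div_const t).neg
        refine this.congr_deriv ?_
        simp
        field_simp
      · exact (by fun_prop : Continuous fun u : ℝ => exp (-(u * t))).intervalIntegrable _ _)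
    (fun u hu => by
      simpa using integrableOn_rpow_mul_exp (a := γ + 1) (by linarith) hu.1)
    (fun u hu => by
      have := integral_rpow_mul_exp_neg_mul_Ioi (a := γ + 1) (by linarith) hu.1
      rw [add_sub_cancel_right] at this
      rw [this, one_div, inv_rpow hu.1.le, ← rpow_neg hu.1.le, mul_comm]
      congr 2
      ring)
    (((intervalIntegrable_iff_integrableOn_Ioc_of_le hb).1 hpow).const_mul _)
  refine ⟨key.1, key.2.trans ?_⟩
  rw [integral_const_mul, ← intervalIntegral.integral_of_le hb,
    integral_rpow (Or.inl (by linarith)), Gamma_add_one h2.ne]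
  rw [sub_add_cancel, zero_rpow (by linarith)]
  have := h2.ne
  field_simp
  ring

lemma integral_sq_rpow_sub {β b : ℝ} (h1 : 0 < β) (h2 : β < 1 / 2) (hb : 0 ≤ b) :
    IntegrableOn (fun s : ℝ => (s ^ 2) ^ (-β) - (s ^ 2 + b) ^ (-β)) (Set.Ioi 0) ∧
    ∫ s in Set.Ioi (0 : ℝ), ((s ^ 2) ^ (-β) - (s ^ 2 + b) ^ (-β)) =
      -(√π * Gamma (β - 1 / 2) / (2 * Gamma β)) * b ^ (1 / 2 - β) := by
  obtain ⟨hi, hv⟩ := integral_rpow_mul_one_sub_exp (γ := β - 1 / 2) (b := b)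
    (by linarith) (by linarith) hb
  have hG : 0 < Gamma β := Gamma_pos_of_pos h1
  have hgam : ∀ r : ℝ, 0 < r →
      ∫ t in Set.Ioi (0 : ℝ), t ^ (β - 1) * exp (-(r * t)) = Gamma β * r ^ (-β) := by
    intro r hr
    rw [integral_rpow_mul_exp_neg_mul_Ioi h1 hr, one_div, inv_rpow hr.le, ← rpow_neg hr.le,
      mul_comm]
  have key := tonelli_swap (S := Set.Ioi 0) (T := Set.Ioi 0) measurableSet_Ioi
    measurableSet_Ioi
    (fun s t => (t ^ (β - 1) * (1 - exp (-(b * t)))) * exp (-t * s ^ 2))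
    (by unfold Function.uncurry; fun_prop)
    (fun s => Gamma β * ((s ^ 2) ^ (-β) - (s ^ 2 + b) ^ (-β)))
    (fun t => √π / 2 * (t ^ (β - 1 / 2 - 1) * (1 - exp (-(b * t)))))
    (fun s hs t ht => by
      have ht : (0 : ℝ) < t := ht
      have : exp (-(b * t)) ≤ 1 := exp_le_one_iff.2 (by nlinarith)
      have : 0 ≤ 1 - exp (-(b * t)) := by linarith
      positivity)
    (fun s hs => by
      have hs : 0 < s ^ 2 := pow_pos hs 2
      have hsb : 0 < s ^ 2 + b := by positivity
      rw [mul_sub, ← hgam _ hs, ← hgam _ hsb, ← integral_sub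
        (integrableOn_rpow_mul_exp h1 hs) (integrableOn_rpow_mul_exp h1 hsb)]
      congr 1
      ext t
      rw [show -((s ^ 2 + b) * t) = -(b * t) + -t * s ^ 2 by ring,
        show -(s ^ 2 * t) = -t * s ^ 2 by ring, exp_add]
      ring)
    (fun t ht => (integrable_exp_neg_mul_sq ht).integrableOn.const_mul _)
    (fun t ht => by
      have ht : (0 : ℝ) < t := ht
      rw [integral_const_mul, integral_gaussian_Ioi, sqrt_div pi_pos.le,
        show β - 1 / 2 - 1 = (β - 1) - 1 / 2 by ring, rpow_sub ht (β - 1) (1 / 2), ← sqrt_eq_rpow]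
      ring)
    (hi.const_mul _)
  obtain ⟨k1, k2⟩ := key
  constructor
  · have := k1.const_mul (Gamma β)⁻¹
    simpa [IntegrableOn, inv_mul_cancel_left₀ hG.ne'] using this
  · rw [integral_const_mul, integral_const_mul, hv, neg_sub] at k2
    rw [← mul_right_inj' hG.ne', k2]
    field_simp

/-- For `1 < α < 2` and every `c ∈ ℝ`,
`∫₀^∞ [(s²+1)^{-(2-α)/2} - (s²+c²)^{-(2-α)/2}] ds
  = (√π Γ((1-α)/2) / (2 Γ(1-α/2))) (1 - |c|^{α-1})`,
the integral being absolutely convergent. -/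
theorem gsqg_scale_identity (α : ℝ) (hα1 : 1 < α) (hα2 : α < 2) (c : ℝ) :
    IntegrableOn
      (fun s : ℝ =>
        (s ^ 2 + 1) ^ (-((2 - α) / 2)) - (s ^ 2 + c ^ 2) ^ (-((2 - α) / 2)))
      (Set.Ioi 0) volume ∧
    (∫ s in Set.Ioi (0 : ℝ),
        ((s ^ 2 + 1) ^ (-((2 - α) / 2)) - (s ^ 2 + c ^ 2) ^ (-((2 - α) / 2))))
      = Real.sqrt π * Real.Gamma ((1 - α) / 2) / (2 * Real.Gamma (1 - α / 2))
          * (1 - |c| ^ (α - 1)) := by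
  obtain ⟨i1, v1⟩ := integral_sq_rpow_sub (β := (2 - α) / 2) (b := 1)
    (by linarith) (by linarith) zero_le_one
  obtain ⟨ic, vc⟩ := integral_sq_rpow_sub (β := (2 - α) / 2) (b := c ^ 2)
    (by linarith) (by linarith) (sq_nonneg c)
  have hfun : (fun s : ℝ =>
      (s ^ 2 + 1) ^ (-((2 - α) / 2)) - (s ^ 2 + c ^ 2) ^ (-((2 - α) / 2))) =
      fun s : ℝ => ((s ^ 2) ^ (-((2 - α) / 2)) - (s ^ 2 + c ^ 2) ^ (-((2 - α) / 2))) -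
        ((s ^ 2) ^ (-((2 - α) / 2)) - (s ^ 2 + 1) ^ (-((2 - α) / 2))) := by
    ext s
    ring
  have hc : (c ^ 2) ^ (1 / 2 - (2 - α) / 2) = |c| ^ (α - 1) := by
    rw [← sq_abs, ← rpow_natCast_mul (abs_nonneg c)]
    congr 1
    push_cast
    ring
  rw [hfun]
  refine ⟨ic.sub i1, ?_⟩
  rw [integral_sub ic i1, v1, vc, hc, one_rpow, show (2 - α) / 2 - 1 / 2 = (1 - α) / 2 by ring,
    show (2 - α) / 2 = 1 - α / 2 by ring]
  ring
end
end
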